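/- arXiv:2502.12773 — 3 statements merged into one kernel-verified Lean document; each statement's English description precedes it below -/
import Mathlib

section
/- Let G be a connected bridgeless finite simple graph with n vertices and m edges, and write its flow polynomial as F(G,t) = Σ_{i=0}^{m−n+1} c_i t^i. Then for every i with 0 ≤ i ≤ m−n+1 one has |c_i| ≤ d_i, where the d_i are defined by Σ_{i=0}^{m−n+1} d_i t^i = ∏_{j=1}^{m−n+1} (t+j) if n ≤ m ≤ n+3, and Σ_{i=0}^{m−n+1} d_i t^i = (t+1)(t+2)(t+3)^2(t+4)^{m−n−3} if m ≥ n+4. -/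
open Polynomial

/-- The flow polynomial of a finite simple graph `G`:
`F(G,t) = Σ_{Z ⊆ E(G)} (−1)^{m−|Z|} t^{|Z|+c(Z)−n}`, where `c(Z)` is the number of
connected components of the spanning subgraph with edge set `Z`. -/
noncomputable def flowPoly {V : Type} [Fintype V] (G : SimpleGraph V) : Polynomial ℤ :=
  ∑ Z ∈ G.edgeSet.toFinite.toFinset.powerset,
    (-1 : ℤ) ^ (G.edgeSet.toFinite.toFinset.card - Z.card) •
      (X : Polynomial ℤ) ^
        (Z.card + Nat.card (SimpleGraph.fromEdgeSet (↑Z : Set (Sym2 V))).ConnectedComponent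
          - Fintype.card V)

/-- The number of edges of `G`. -/
noncomputable def edgeCount {V : Type} [Fintype V] (G : SimpleGraph V) : ℕ :=
  G.edgeSet.toFinite.toFinset.card


/-- All coefficients are nonnegative. -/
def FlowNN (p : Polynomial ℤ) : Prop := ∀ i, 0 ≤ p.coeff i

lemma FlowNN.add {p q : ℤ[X]} (hp : FlowNN p) (hq : FlowNN q) : FlowNN (p + q) := by
  intro i; rw [coeff_add]; exact add_nonneg (hp i) (hq i)

lemma FlowNN.mul {p q : ℤ[X]} (hp : FlowNN p) (hq : FlowNN q) : FlowNN (p * q) := by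
  intro i; rw [coeff_mul]
  exact Finset.sum_nonneg fun x _ => mul_nonneg (hp _) (hq _)

lemma FlowNN.zero : FlowNN 0 := by intro i; simp

lemma FlowNN.one : FlowNN 1 := by
  intro i; rw [coeff_one]; split_ifs <;> norm_num

lemma FlowNN.X : FlowNN (X : ℤ[X]) := by
  intro i; rw [coeff_X]; split_ifs <;> norm_num

lemma FlowNN.pow {p : ℤ[X]} (hp : FlowNN p) (k : ℕ) : FlowNN (p ^ k) := by
  induction k with
  | zero => simpa using FlowNN.one
  | succ k ih => rw [pow_succ]; exact ih.mul hp

lemma FlowNN.nat (k : ℕ) : FlowNN (k : ℤ[X]) := by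
  induction k with
  | zero => simpa using FlowNN.zero
  | succ k ih => rw [Nat.cast_succ]; exact ih.add FlowNN.one

lemma FlowNN.ofNat (k : ℕ) [k.AtLeastTwo] : FlowNN (OfNat.ofNat k : ℤ[X]) := by
  have := FlowNN.nat (OfNat.ofNat k)
  rwa [Nat.cast_ofNat] at this

lemma FlowNN.trans {p q r : ℤ[X]} (h1 : FlowNN (q - p)) (h2 : FlowNN (r - q)) :
    FlowNN (r - p) := by
  have := h1.add h2
  convert this using 1; ring

lemma FlowNN.mul_left {p q r : ℤ[X]} (hr : FlowNN r) (h : FlowNN (q - p)) :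
    FlowNN (r * q - r * p) := by
  rw [← mul_sub]; exact hr.mul h

/-- The triangular array of auxiliary polynomials. -/
noncomputable def flowA : ℕ → ℕ → ℤ[X]
  | 0, _ => 1
  | h + 1, 0 => (X + 2) ^ (h + 1)
  | h + 1, j + 1 => if j ≤ h then flowA (h + 1) j + flowA h (j + 1) else flowA (h + 1) j

lemma flowA_zero (h : ℕ) : flowA h 0 = (X + 2) ^ h := by
  cases h <;> simp [flowA]

lemma flowA_zero_left (j : ℕ) : flowA 0 j = 1 := by simp [flowA]

lemma flowA_step {h j : ℕ} (hj : j ≤ h) :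
    flowA (h + 1) (j + 1) = flowA (h + 1) j + flowA h (j + 1) := by
  rw [flowA]; simp [hj]

lemma flowA_const {h j : ℕ} (hj : h ≤ j) : flowA h (j + 1) = flowA h j := by
  cases h with
  | zero => simp [flowA]
  | succ h => rw [flowA]; rw [if_neg (by omega)]

lemma flowNN_X2 : FlowNN (X + 2 : ℤ[X]) := FlowNN.X.add (FlowNN.ofNat 2)
lemma flowNN_X1 : FlowNN (X + 1 : ℤ[X]) := FlowNN.X.add FlowNN.one

lemma flowA_nn (h j : ℕ) : FlowNN (flowA h j) := by
  induction h generalizing j with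
  | zero => rw [flowA_zero_left]; exact FlowNN.one
  | succ h ih =>
    induction j with
    | zero => rw [flowA_zero]; exact flowNN_X2.pow _
    | succ j ihj =>
      by_cases hj : j ≤ h
      · rw [flowA_step hj]; exact ihj.add (ih _)
      · rw [flowA_const (by omega)]; exact ihj

lemma flowA_succ_le (h j : ℕ) : FlowNN (flowA h (j + 1) - flowA h j) := by
  by_cases hj : h ≤ j
  · rw [flowA_const hj, sub_self]; exact FlowNN.zero
  · obtain ⟨h, rfl⟩ : ∃ k, h = k + 1 := ⟨h - 1, by omega⟩
    rw [flowA_step (by omega), add_sub_cancel_left]; exact flowA_nn _ _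

lemma flowA_mono (h : ℕ) {j k : ℕ} (hjk : j ≤ k) : FlowNN (flowA h k - flowA h j) := by
  induction k, hjk using Nat.le_induction with
  | base => rw [sub_self]; exact FlowNN.zero
  | succ k _ ih => exact ih.trans (flowA_succ_le h k)

lemma flowA_top {h j : ℕ} (hj : h ≤ j) : flowA h j = flowA h h := by
  induction j, hj using Nat.le_induction with
  | base => rfl
  | succ k hk ih => rw [flowA_const hk, ih]

lemma flowA_par (h j : ℕ) : FlowNN (flowA (h + 1) j - (X + 2) * flowA h j) := by
  induction h generalizing j with
  | zero =>
    rw [flowA_zero_left]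
    have : FlowNN (flowA 1 j - flowA 1 0) := flowA_mono 1 (Nat.zero_le _)
    rw [flowA_zero] at this
    simpa using this
  | succ h ih =>
    induction j with
    | zero => rw [flowA_zero, flowA_zero]; convert FlowNN.zero using 1; ring
    | succ j ihj =>
      rcases lt_trichotomy j (h + 1) with hj | hj | hj
      · rw [flowA_step (h := h + 1) (by omega)]
        have e := flowA_step (h := h) (j := j) (by omega)
        convert ihj.add (ih (j + 1)) using 1
        rw [e]; ring
      · subst hj
        rw [flowA_step (h := h + 1) (by omega), flowA_const (h := h + 1) le_rfl]
        convert ihj.add (flowA_nn (h + 1) (h + 1)) using 1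
        ring
      · rw [flowA_const (by omega), flowA_const (by omega)]; exact ihj

lemma flowA_loop_zero (h : ℕ) : flowA (h + 1) 0 - (X + 1) * flowA h 1 = 1 := by
  induction h with
  | zero => rw [flowA_zero, flowA_zero_left]; ring
  | succ h ih =>
    rw [flowA_step (h := h) (j := 0) (by omega)]
    rw [flowA_zero] at ih ⊢
    rw [flowA_zero]
    linear_combination ih

lemma flowA_loop (h j : ℕ) : FlowNN (flowA (h + 1) j - (X + 1) * flowA h (j + 1)) := by
  induction h generalizing j with
  | zero =>
    have := (flowA_par 0 j).add (flowA_nn 0 j)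
    rw [flowA_zero_left] at *
    convert this using 1; ring
  | succ h ih =>
    induction j with
    | zero => rw [flowA_loop_zero]; exact FlowNN.one
    | succ j ihj =>
      by_cases hj : j + 1 < h + 1
      · rw [flowA_step (h := h + 1) (by omega)]
        have e := flowA_step (h := h) (j := j + 1) (by omega)
        convert ihj.add (ih (j + 1)) using 1
        rw [e]; ring
      · rw [flowA_const (h := h + 1) (by omega)]
        convert (flowA_par (h + 1) (j + 1)).add (flowA_nn (h + 1) (j + 1)) using 1
        ring

lemma flowA_diag (h j : ℕ) (hj : j ≤ h) :
    FlowNN ((X + 4) * flowA h j - flowA (h + 1) (j + 1)) := by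
  induction h generalizing j with
  | zero =>
    obtain rfl : j = 0 := by omega
    rw [flowA_step (by omega), flowA_zero, flowA_zero, flowA_zero_left]
    convert FlowNN.one using 1; ring
  | succ h ih =>
    induction j with
    | zero =>
      have := (ih 0 (by omega)).add ((flowNN_X2.pow h).mul FlowNN.X)
      rw [flowA_step (by omega), flowA_zero, flowA_zero]
      rw [flowA_zero] at this
      convert this using 1; ring
    | succ j ihj =>
      have i1 := ihj (by omega)
      have e1 := flowA_step (h := h) (j := j) (by omega)
      have e2 := flowA_step (h := h + 1) (j := j + 1) (by omega)
      rcases Nat.lt_or_ge j h with h1 | h1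
      · convert i1.add (ih (j + 1) (by omega)) using 1
        rw [e2, e1]; ring
      · obtain rfl : j = h := by omega
        convert i1.add (ih j le_rfl) using 1
        rw [e2, flowA_const (h := j + 1) le_rfl]
        rw [flowA_const (h := j) le_rfl] at e1
        linear_combination (X + 4) * e1

lemma flowA_22 : flowA 2 2 = X ^ 2 + 6 * X + 10 := by
  simp [flowA]; ring

lemma flowA_33 : flowA 3 3 = X ^ 3 + 9 * X ^ 2 + 29 * X + 35 := by
  simp [flowA]; ring

lemma flowA_final (k : ℕ) :
    FlowNN ((X + 3) ^ 2 * (X + 4) ^ (k + 1) - flowA (k + 3) (k + 3)) := by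
  induction k with
  | zero =>
    rw [flowA_33]
    convert ((FlowNN.X.pow 2).add ((FlowNN.ofNat 4).mul FlowNN.X)).add FlowNN.one using 1
    ring
  | succ k ih =>
    have h1 := (FlowNN.X.add (FlowNN.ofNat 4)).mul_left ih
    have h2 := (flowA_diag (k + 3) (k + 3) le_rfl).trans h1
    convert h2 using 1; ring

/-- The bound for genus `g` and root degree `d`. -/
noncomputable def flowN : ℕ → ℕ → ℤ[X]
  | 0, _ => 1
  | 1, _ => X + 1
  | g + 2, d => (X + 1) * (X + 2) * flowA g (g + 3 - d)

lemma flowNN_12 : FlowNN ((X + 1) * (X + 2) : ℤ[X]) := flowNN_X1.mul flowNN_X2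

lemma flowN_nn (g d : ℕ) : FlowNN (flowN g d) := by
  match g with
  | 0 => exact FlowNN.one
  | 1 => exact flowNN_X1
  | g + 2 => exact flowNN_12.mul (flowA_nn _ _)

lemma flowN_anti (g : ℕ) {d d' : ℕ} (h : d ≤ d') : FlowNN (flowN g d - flowN g d') := by
  match g with
  | 0 => simpa [flowN] using FlowNN.zero
  | 1 => simpa [flowN] using FlowNN.zero
  | g + 2 => exact flowNN_12.mul_left (flowA_mono _ (by omega))

lemma flowN_small (g : ℕ) {d : ℕ} (h : d ≤ 3) : flowN g d = flowN g 0 := by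
  match g with
  | 0 => rfl
  | 1 => rfl
  | g + 2 => 
    simp only [flowN]
    rw [flowA_top (by omega), flowA_top (h := g) (j := g + 3 - 0) (by omega)]

lemma flowN_loop (g : ℕ) {d d' : ℕ} (h : d ≤ d' + 2) :
    FlowNN (flowN (g + 1) d - (X + 1) * flowN g d') := by
  match g with
  | 0 => simpa [flowN] using FlowNN.zero
  | 1 =>
    simp only [flowN, flowA_zero_left]
    convert flowNN_X1 using 1; ring
  | g + 2 =>
    have h1 := flowA_loop g (g + 1 + 3 - d)
    have h2 := flowNN_X1.mul_left (flowA_mono g (show g + 3 - d' ≤ g + 1 + 3 - d + 1 by omega))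
    have := flowNN_12.mul (h2.trans h1)
    simp only [flowN]
    convert this using 1; ring

lemma flowN_par (g : ℕ) {d d' : ℕ} (h : d ≤ d' + 1) :
    FlowNN (flowN (g + 2) d - (X + 2) * flowN (g + 1) d') := by
  match g with
  | 0 =>
    simp only [flowN, flowA_zero_left]
    convert FlowNN.zero using 1; ring
  | g + 1 =>
    have h1 := flowA_par g (g + 1 + 3 - d)
    have h2 := flowNN_X2.mul_left (flowA_mono g (show g + 3 - d' ≤ g + 1 + 3 - d by omega))
    have := flowNN_12.mul (h2.trans h1)
    simp only [flowN]
    convert this using 1; ring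

lemma flowN_con (g : ℕ) {d d1 d2 : ℕ} (h3 : 3 ≤ d) (hg : d ≤ g + 1) (h1 : d + 1 ≤ d1)
    (h2 : d ≤ d2 + 1) :
    FlowNN (flowN (g + 1) d - (flowN (g + 1) d1 + flowN g d2)) := by
  obtain ⟨g, rfl⟩ : ∃ k, g = k + 2 := ⟨g - 2, by omega⟩
  simp only [flowN]
  obtain ⟨j, hj⟩ : ∃ j, g + 1 + 3 - d = j + 1 := ⟨g + 3 - d, by omega⟩
  rw [hj, flowA_step (by omega)]
  have a1 := flowA_mono (g + 1) (show g + 1 + 3 - d1 ≤ j by omega)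
  have a2 := flowA_mono g (show g + 3 - d2 ≤ j + 1 by omega)
  convert flowNN_12.mul (a1.add a2) using 1; ring

section FlowLin

set_option linter.unusedSectionVars false

variable {ι : Type} [DecidableEq ι] {M : Type} [AddCommGroup M] [Module ℚ M]

/-- Rank of a finite set of vectors. -/
noncomputable def flowR (v : ι → M) (Z : Finset ι) : ℕ :=
  Module.finrank ℚ (Submodule.span ℚ (v '' (Z : Set ι)))

/-- Nullity. -/
noncomputable def flowG (v : ι → M) (Z : Finset ι) : ℕ := Z.card - flowR v Z

/-- Sign-normalised flow polynomial of a vector configuration. -/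
noncomputable def flowF (v : ι → M) (E : Finset ι) : ℤ[X] :=
  ∑ Z ∈ E.powerset, (-1) ^ (flowR v E + flowR v Z) * X ^ (Z.card - flowR v Z)

lemma flowR_le (v : ι → M) (Z : Finset ι) : flowR v Z ≤ Z.card := by
  classical
  unfold flowR
  rw [← Finset.coe_image]
  exact (finrank_span_finset_le_card _).trans Finset.card_image_le

instance flow_fin (v : ι → M) (Z : Finset ι) :
    FiniteDimensional ℚ (Submodule.span ℚ (v '' (Z : Set ι))) :=
  FiniteDimensional.span_of_finite ℚ (Z.finite_toSet.image v)

lemma flowR_insert_mem (v : ι → M) {e : ι} {Z : Finset ι}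
    (h : v e ∈ Submodule.span ℚ (v '' (Z : Set ι))) : flowR v (insert e Z) = flowR v Z := by
  unfold flowR
  rw [Finset.coe_insert, Set.image_insert_eq, Submodule.span_insert_eq_span h]

/-- contraction lowers the rank by one -/
lemma flowR_contract {M' : Type} [AddCommGroup M'] [Module ℚ M'] (v : ι → M) {e : ι}
    (φ : M →ₗ[ℚ] M') (hφ : LinearMap.ker φ = Submodule.span ℚ {v e}) (he : v e ≠ 0)
    (Z : Finset ι) : flowR v (insert e Z) = flowR (φ ∘ v) Z + 1 := by
  set S := Submodule.span ℚ (v '' ((insert e Z : Finset ι) : Set ι)) with hS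
  have : FiniteDimensional ℚ S := flow_fin v (insert e Z)
  have hve : v e ∈ S := Submodule.subset_span ⟨e, by simp, rfl⟩
  have hle : LinearMap.ker φ ≤ S := by
    rw [hφ, Submodule.span_singleton_le_iff_mem]; exact hve
  have hφe : φ (v e) = 0 := by
    have : v e ∈ LinearMap.ker φ := by rw [hφ]; exact Submodule.mem_span_singleton_self _
    exact this
  have h1 := LinearMap.finrank_range_add_finrank_ker (φ.domRestrict S)
  have h2 : LinearMap.range (φ.domRestrict S) = Submodule.span ℚ ((φ ∘ v) '' (Z : Set ι)) := by
    rw [LinearMap.range_domRestrict, hS, Submodule.map_span, Finset.coe_insert,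
      Set.image_insert_eq, Set.image_insert_eq, hφe, Submodule.span_insert_zero, Set.image_comp]
  have h3 : Module.finrank ℚ (LinearMap.ker (φ.domRestrict S)) = 1 := by
    rw [LinearMap.ker_domRestrict]
    refine (Submodule.submoduleOfEquivOfLe hle).finrank_eq.trans ?_
    rw [hφ]
    exact finrank_span_singleton he
  rw [h2, h3] at h1
  unfold flowR
  exact h1.symm

lemma flowR_insert_notMem (v : ι → M) {e : ι} {Z : Finset ι}
    (h : v e ∉ Submodule.span ℚ (v '' (Z : Set ι))) :
    flowR v (insert e Z) = flowR v Z + 1 := by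
  have he : v e ≠ 0 := fun h0 => h (h0 ▸ Submodule.zero_mem _)
  set S := Submodule.span ℚ (v '' (Z : Set ι)) with hS
  have hd : Disjoint (Submodule.span ℚ {v e}) S :=
    ((Submodule.disjoint_span_singleton' he).2 h).symm
  have h1 := Submodule.finrank_sup_add_finrank_inf_eq (Submodule.span ℚ {v e}) S
  rw [hd.eq_bot, finrank_bot, finrank_span_singleton he, hS, ← Submodule.span_union] at h1
  unfold flowR
  rw [Finset.coe_insert, Set.image_insert_eq, Set.insert_eq]
  omega

lemma flowF_loop (v : ι → M) {e : ι} {E : Finset ι} (he : e ∉ E) (h0 : v e = 0) :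
    flowF v (insert e E) = (X + 1) * flowF v E := by
  have hr : ∀ Z : Finset ι, flowR v (insert e Z) = flowR v Z := fun Z =>
    flowR_insert_mem v (h0 ▸ Submodule.zero_mem _)
  unfold flowF
  rw [Finset.sum_powerset_insert he, ← Finset.sum_add_distrib, Finset.mul_sum]
  refine Finset.sum_congr rfl fun Z hZ => ?_
  have hZe : e ∉ Z := fun h => he (Finset.mem_powerset.1 hZ h)
  rw [hr, hr, Finset.card_insert_of_notMem hZe, Nat.sub_add_comm (flowR_le v Z)]
  ring

lemma flowF_bridge (v : ι → M) {e : ι} {E : Finset ι} (he : e ∉ E)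
    (h : v e ∉ Submodule.span ℚ (v '' (E : Set ι))) : flowF v (insert e E) = 0 := by
  unfold flowF
  rw [Finset.sum_powerset_insert he, ← Finset.sum_add_distrib]
  refine Finset.sum_eq_zero fun Z hZ => ?_
  have hZE := Finset.mem_powerset.1 hZ
  have hZe : e ∉ Z := fun h => he (hZE h)
  rw [flowR_insert_notMem v h, flowR_insert_notMem v (Z := Z) (fun h' => h
    (Submodule.span_mono (Set.image_mono (by exact_mod_cast hZE)) h')),
    Finset.card_insert_of_notMem hZe, Nat.add_sub_add_right]
  ring

lemma flowF_delcon {M' : Type} [AddCommGroup M'] [Module ℚ M'] (v : ι → M) {e : ι}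
    {E : Finset ι} (he : e ∉ E)
    (φ : M →ₗ[ℚ] M') (hφ : LinearMap.ker φ = Submodule.span ℚ {v e}) (h0 : v e ≠ 0)
    (h : v e ∈ Submodule.span ℚ (v '' (E : Set ι))) :
    flowF v (insert e E) = flowF v E + flowF (φ ∘ v) E := by
  unfold flowF
  rw [Finset.sum_powerset_insert he]
  congr 1
  · rw [flowR_insert_mem v h]
  · refine Finset.sum_congr rfl fun Z hZ => ?_
    have hZe : e ∉ Z := fun h => he (Finset.mem_powerset.1 hZ h)
    rw [flowR_contract v φ hφ h0, flowR_contract v φ hφ h0, Finset.card_insert_of_notMem hZe,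
      Nat.add_sub_add_right]
    ring

lemma flowF_empty (v : ι → M) : flowF v ∅ = 1 := by
  unfold flowF
  simp [← two_mul]

lemma flowF_nn (E : Finset ι) : ∀ {M : Type} [AddCommGroup M] [Module ℚ M] (v : ι → M),
    FlowNN (flowF v E) := by
  induction E using Finset.induction_on with
  | empty => intro M _ _ v; rw [flowF_empty]; exact FlowNN.one
  | insert e E he ih =>
    intro M _ _ v
    by_cases h0 : v e = 0
    · rw [flowF_loop v he h0]; exact flowNN_X1.mul (ih v)
    · by_cases h : v e ∈ Submodule.span ℚ (v '' (E : Set ι))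
      · rw [flowF_delcon v he (Submodule.mkQ (Submodule.span ℚ {v e})) (Submodule.ker_mkQ _) h0 h]
        exact (ih _).add (ih _)
      · rw [flowF_bridge v he h]; exact FlowNN.zero

lemma flowG_insert_mem (v : ι → M) {e : ι} {E : Finset ι} (he : e ∉ E)
    (h : v e ∈ Submodule.span ℚ (v '' (E : Set ι))) :
    flowG v (insert e E) = flowG v E + 1 := by
  unfold flowG
  rw [flowR_insert_mem v h, Finset.card_insert_of_notMem he, Nat.sub_add_comm (flowR_le v E)]

lemma flowG_contract {M' : Type} [AddCommGroup M'] [Module ℚ M'] (v : ι → M) {e : ι}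
    {E : Finset ι} (he : e ∉ E)
    (φ : M →ₗ[ℚ] M') (hφ : LinearMap.ker φ = Submodule.span ℚ {v e}) (h0 : v e ≠ 0) :
    flowG v (insert e E) = flowG (φ ∘ v) E := by
  unfold flowG
  rw [flowR_contract v φ hφ h0, Finset.card_insert_of_notMem he, Nat.add_sub_add_right]

end FlowLin

section FlowGraph

set_option linter.unusedSectionVars false

variable {ι : Type} [DecidableEq ι] {α : Type} [DecidableEq α]

/-- incidence vector of an edge -/
noncomputable def flowVec (p q : ι → α) (i : ι) : α →₀ ℚ :=
  Finsupp.single (p i) 1 - Finsupp.single (q i) 1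

/-- degree of a vertex (loops count twice) -/
def flowDeg (p q : ι → α) (E : Finset ι) (x : α) : ℕ :=
  ∑ i ∈ E, ((if p i = x then 1 else 0) + (if q i = x then 1 else 0))

/-- identify `v` with `w` -/
def flowCtr (v w : α) (x : α) : α := if x = v then w else x

/-- the edge `e` joins `v` and `w` -/
def flowJoin (p q : ι → α) (e : ι) (v w : α) : Prop :=
  (p e = v ∧ q e = w) ∨ (p e = w ∧ q e = v)

lemma flow_ker {v w : α} (hvw : v ≠ w) :
    LinearMap.ker (Finsupp.lmapDomain ℚ ℚ (flowCtr v w)) =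
      Submodule.span ℚ {(Finsupp.single v 1 - Finsupp.single w 1 : α →₀ ℚ)} := by
  have hv : flowCtr v w v = w := by simp [flowCtr]
  have hw : flowCtr v w w = w := by simp [flowCtr, hvw.symm]
  apply le_antisymm
  · intro x hx
    rw [Submodule.mem_span_singleton]
    refine ⟨x v, ?_⟩
    set y := x - x v • (Finsupp.single v 1 - Finsupp.single w 1 : α →₀ ℚ) with hy
    have hyv : y v = 0 := by
      simp [hy, hvw.symm]
    have h1 : Finsupp.mapDomain (flowCtr v w) y = 0 := by
      have hx' : Finsupp.lmapDomain ℚ ℚ (flowCtr v w) x = 0 := hx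
      have : Finsupp.lmapDomain ℚ ℚ (flowCtr v w) y = 0 := by
        rw [hy, map_sub, hx', map_smul, map_sub]
        simp [Finsupp.mapDomain_single, hv, hw]
      exact this
    have h2 : Finsupp.mapDomain (flowCtr v w) y = Finsupp.mapDomain id y := by
      apply Finsupp.mapDomain_congr
      intro a ha
      have : a ≠ v := by
        rintro rfl; exact (Finsupp.mem_support_iff.1 ha) hyv
      simp [flowCtr, this]
    rw [h2, Finsupp.mapDomain_id] at h1
    exact (sub_eq_zero.1 (hy ▸ h1)).symm
  · rw [Submodule.span_singleton_le_iff_mem, LinearMap.mem_ker, map_sub]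
    simp [Finsupp.mapDomain_single, hv, hw]

lemma flowVec_ctr (p q : ι → α) (v w : α) :
    (Finsupp.lmapDomain ℚ ℚ (flowCtr v w)) ∘ flowVec p q =
      flowVec (flowCtr v w ∘ p) (flowCtr v w ∘ q) := by
  funext i
  simp only [flowVec, Function.comp, map_sub]
  simp [Finsupp.mapDomain_single]

lemma flowVec_ker {p q : ι → α} {e : ι} {v w : α} (hvw : v ≠ w) (hj : flowJoin p q e v w) :
    LinearMap.ker (Finsupp.lmapDomain ℚ ℚ (flowCtr v w)) =
      Submodule.span ℚ {flowVec p q e} := by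
  rw [flow_ker hvw]
  rcases hj with ⟨h1, h2⟩ | ⟨h1, h2⟩
  · simp [flowVec, h1, h2]
  · have : flowVec p q e = -(Finsupp.single v 1 - Finsupp.single w 1 : α →₀ ℚ) := by
      simp [flowVec, h1, h2]
    rw [this, ← Set.neg_singleton, Submodule.span_neg]

lemma flowVec_ne {p q : ι → α} {e : ι} (h : p e ≠ q e) : flowVec p q e ≠ 0 := by
  intro h0
  have := DFunLike.congr_fun h0 (p e)
  simp [flowVec, h.symm] at this

lemma flowJoin.ne {p q : ι → α} {e : ι} {v w : α} (hvw : v ≠ w) (hj : flowJoin p q e v w) :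
    p e ≠ q e := by
  rcases hj with ⟨h1, h2⟩ | ⟨h1, h2⟩
  · rw [h1, h2]; exact hvw
  · rw [h1, h2]; exact hvw.symm

/-- deletion-contraction for graphs -/
lemma flow_delcon {p q : ι → α} {e : ι} {E : Finset ι} {v w : α} (he : e ∉ E) (hvw : v ≠ w)
    (hj : flowJoin p q e v w) :
    flowG (flowVec p q) (insert e E) = flowG (flowVec (flowCtr v w ∘ p) (flowCtr v w ∘ q)) E ∧
    (flowF (flowVec p q) (insert e E) = 0 ∨
      (flowG (flowVec p q) (insert e E) = flowG (flowVec p q) E + 1 ∧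
       flowF (flowVec p q) (insert e E) = flowF (flowVec p q) E +
        flowF (flowVec (flowCtr v w ∘ p) (flowCtr v w ∘ q)) E)) := by
  have h0 := flowVec_ne (hj.ne hvw)
  have hk := flowVec_ker hvw hj
  rw [← flowVec_ctr]
  refine ⟨flowG_contract _ he _ hk h0, ?_⟩
  by_cases h : flowVec p q e ∈ Submodule.span ℚ (flowVec p q '' (E : Set ι))
  · right
    exact ⟨flowG_insert_mem _ he h, flowF_delcon _ he _ hk h0 h⟩
  · left
    exact flowF_bridge _ he h

lemma flow_loop {p q : ι → α} {e : ι} {E : Finset ι} (he : e ∉ E) (h : p e = q e) :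
    flowG (flowVec p q) (insert e E) = flowG (flowVec p q) E + 1 ∧
    flowF (flowVec p q) (insert e E) = (X + 1) * flowF (flowVec p q) E := by
  have h0 : flowVec p q e = 0 := by simp [flowVec, h]
  exact ⟨flowG_insert_mem _ he (h0 ▸ Submodule.zero_mem _), flowF_loop _ he h0⟩

lemma flowDeg_insert {p q : ι → α} {e : ι} {E : Finset ι} (he : e ∉ E) (x : α) :
    flowDeg p q (insert e E) x =
      ((if p e = x then 1 else 0) + (if q e = x then 1 else 0)) + flowDeg p q E x := by
  unfold flowDeg; rw [Finset.sum_insert he]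

lemma flowDeg_ctr_ne {p q : ι → α} {E : Finset ι} {v w x : α} (hv : x ≠ v) (hw : x ≠ w) :
    flowDeg (flowCtr v w ∘ p) (flowCtr v w ∘ q) E x = flowDeg p q E x := by
  unfold flowDeg
  refine Finset.sum_congr rfl fun i _ => ?_
  simp only [flowCtr, Function.comp]
  grind

lemma flowDeg_ctr_eq {p q : ι → α} {E : Finset ι} {v w : α} (hvw : v ≠ w) :
    flowDeg (flowCtr v w ∘ p) (flowCtr v w ∘ q) E w = flowDeg p q E v + flowDeg p q E w := by
  unfold flowDeg
  rw [← Finset.sum_add_distrib]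
  refine Finset.sum_congr rfl fun i _ => ?_
  simp only [flowCtr, Function.comp]
  grind

lemma flowJoin_deg_left {p q : ι → α} {e : ι} {E : Finset ι} {v w : α} (he : e ∉ E)
    (hvw : v ≠ w) (hj : flowJoin p q e v w) :
    flowDeg p q (insert e E) v = flowDeg p q E v + 1 := by
  rw [flowDeg_insert he]
  rcases hj with ⟨h1, h2⟩ | ⟨h1, h2⟩ <;> simp [h1, h2, hvw.symm] <;> omega

lemma flowJoin.symm {p q : ι → α} {e : ι} {v w : α} (hj : flowJoin p q e v w) :
    flowJoin p q e w v := by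
  rcases hj with h | h
  · exact Or.inr h
  · exact Or.inl h

lemma flowJoin_deg_ne {p q : ι → α} {e : ι} {E : Finset ι} {v w x : α} (he : e ∉ E)
    (hv : x ≠ v) (hw : x ≠ w) (hj : flowJoin p q e v w) :
    flowDeg p q (insert e E) x = flowDeg p q E x := by
  rw [flowDeg_insert he]
  rcases hj with ⟨h1, h2⟩ | ⟨h1, h2⟩ <;> simp [h1, h2, hv.symm, hw.symm]

lemma flowDeg_eq_zero {p q : ι → α} {E : Finset ι} {x : α} (h : flowDeg p q E x = 0)
    {i : ι} (hi : i ∈ E) : p i ≠ x ∧ q i ≠ x := by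
  unfold flowDeg at h
  rw [Finset.sum_eq_zero_iff] at h
  have := h i hi
  grind

lemma flowDeg_pos {p q : ι → α} {E : Finset ι} {x : α} (h : 0 < flowDeg p q E x)
    (hl : ∀ i ∈ E, p i ≠ q i) : ∃ e ∈ E, ∃ w, x ≠ w ∧ flowJoin p q e x w := by
  by_contra hcon
  push Not at hcon
  have : flowDeg p q E x = 0 := by
    unfold flowDeg
    refine Finset.sum_eq_zero fun i hi => ?_
    have h1 : p i ≠ x := fun hp => hcon i hi (q i) (hp ▸ hl i hi) (Or.inl ⟨hp, rfl⟩)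
    have h2 : q i ≠ x := fun hq => hcon i hi (p i) (hq ▸ (hl i hi).symm) (Or.inr ⟨rfl, hq⟩)
    simp [h1, h2]
  omega

lemma flow_bridge {p q : ι → α} {e : ι} {E : Finset ι} {v w : α} (he : e ∉ E)
    (hvw : v ≠ w) (hj : flowJoin p q e v w) (hd : flowDeg p q E v = 0) :
    flowF (flowVec p q) (insert e E) = 0 := by
  apply flowF_bridge _ he
  intro hmem
  have hle : Submodule.span ℚ (flowVec p q '' (E : Set ι)) ≤
      LinearMap.ker (Finsupp.lapply v : (α →₀ ℚ) →ₗ[ℚ] ℚ) := by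
    rw [Submodule.span_le]
    rintro _ ⟨i, hi, rfl⟩
    obtain ⟨h1, h2⟩ := flowDeg_eq_zero hd (Finset.mem_coe.1 hi)
    simp [flowVec, h1, h2]
  have h3 : flowVec p q e v = 0 := hle hmem
  rcases hj with ⟨h1, h2⟩ | ⟨h1, h2⟩ <;>
    simp [flowVec, h1, h2, hvw.symm] at h3

lemma flow_deg_one {p q : ι → α} {E : Finset ι} {v : α} (hl : ∀ i ∈ E, p i ≠ q i)
    (hd : flowDeg p q E v = 1) : flowF (flowVec p q) E = 0 := by
  obtain ⟨e, he, w, hvw, hj⟩ := flowDeg_pos (x := v) (by omega) hl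
  have h := flowJoin_deg_left (Finset.notMem_erase e E) hvw hj
  have h2 := flow_bridge (Finset.notMem_erase e E) hvw hj
  rw [Finset.insert_erase he] at h h2
  exact h2 (by omega)

lemma flowR_le_verts {p q : ι → α} {E : Finset ι} (U : α) (W : Finset α)
    (hW : ∀ i ∈ E, (p i = U ∨ p i ∈ W) ∧ (q i = U ∨ q i ∈ W)) :
    flowR (flowVec p q) E ≤ W.card := by
  let b : α → (α →₀ ℚ) := fun x => Finsupp.single x 1 - Finsupp.single U 1
  have hb : ∀ x, (x = U ∨ x ∈ W) → b x ∈ Submodule.span ℚ ((W.image b : Finset _) : Set (α →₀ ℚ)) := by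
    rintro x (rfl | hx)
    · simp [b]
    · exact Submodule.subset_span (by simpa using ⟨x, hx, rfl⟩)
  have hle : Submodule.span ℚ (flowVec p q '' (E : Set ι)) ≤
      Submodule.span ℚ ((W.image b : Finset _) : Set (α →₀ ℚ)) := by
    rw [Submodule.span_le]
    rintro _ ⟨i, hi, rfl⟩
    have h := hW i hi
    have : flowVec p q i = b (p i) - b (q i) := by simp [flowVec, b]
    rw [this]
    exact Submodule.sub_mem _ (hb _ h.1) (hb _ h.2)
  unfold flowR
  refine (Submodule.finrank_mono hle).trans ?_
  exact (finrank_span_finset_le_card _).trans Finset.card_image_le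

lemma flow_handshake {p q : ι → α} {E : Finset ι} (S : Finset α)
    (hS : ∀ i ∈ E, p i ∈ S ∧ q i ∈ S) : ∑ x ∈ S, flowDeg p q E x = 2 * E.card := by
  unfold flowDeg
  rw [Finset.sum_comm]
  rw [Finset.sum_congr rfl (g := fun _ => 2)]
  · simp [mul_comm]
  · intro i hi
    rw [Finset.sum_add_distrib]
    simp [hS i hi]

/-- Counting: if all degrees are at least three and there are no loops -/
lemma flow_count {p q : ι → α} {E : Finset ι} {U : α}
    (h3 : ∀ x, flowDeg p q E x = 0 ∨ 3 ≤ flowDeg p q E x) (hU : 3 ≤ flowDeg p q E U) :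
    flowDeg p q E U + ((E.image p ∪ E.image q).erase U).card ≤ 2 * flowG (flowVec p q) E := by
  set S := E.image p ∪ E.image q with hS
  have hSm : ∀ i ∈ E, p i ∈ S ∧ q i ∈ S := fun i hi =>
    ⟨Finset.mem_union_left _ (Finset.mem_image_of_mem _ hi),
      Finset.mem_union_right _ (Finset.mem_image_of_mem _ hi)⟩
  have hd0 : ∀ x ∈ S, 3 ≤ flowDeg p q E x := by
    intro x hx
    rcases h3 x with h | h
    · exfalso
      rw [hS, Finset.mem_union, Finset.mem_image, Finset.mem_image] at hx
      rcases hx with ⟨i, hi, rfl⟩ | ⟨i, hi, rfl⟩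
      · exact (flowDeg_eq_zero h hi).1 rfl
      · exact (flowDeg_eq_zero h hi).2 rfl
    · exact h
  have hUS : U ∈ S := by
    by_contra hn
    have : flowDeg p q E U = 0 := by
      unfold flowDeg
      refine Finset.sum_eq_zero fun i hi => ?_
      have h1 : p i ≠ U := fun h => hn (h ▸ (hSm i hi).1)
      have h2 : q i ≠ U := fun h => hn (h ▸ (hSm i hi).2)
      simp [h1, h2]
    omega
  have hh := flow_handshake S hSm
  rw [← Finset.add_sum_erase _ _ hUS] at hh
  have h4 : ((S.erase U).card) * 3 ≤ ∑ x ∈ S.erase U, flowDeg p q E x := by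
    rw [← smul_eq_mul]
    exact Finset.card_nsmul_le_sum _ _ _ fun x hx => hd0 x (Finset.mem_of_mem_erase hx)
  have h5 := flowR_le_verts (p := p) (q := q) (E := E) U (S.erase U) (by
    intro i hi
    have := hSm i hi
    simp only [Finset.mem_erase]
    tauto)
  unfold flowG
  have := flowR_le (flowVec p q) E
  omega

lemma flow_count_simple {p q : ι → α} {E : Finset ι} {U : α} (hl : ∀ i ∈ E, p i ≠ q i)
    (hp : ∀ e ∈ E, ∀ e' ∈ E, ∀ w, flowJoin p q e U w → flowJoin p q e' U w → e = e') :
    flowDeg p q E U ≤ ((E.image p ∪ E.image q).erase U).card := by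
  have h1 : flowDeg p q E U ≤ (E.filter (fun i => p i = U ∨ q i = U)).card := by
    rw [Finset.card_filter]
    unfold flowDeg
    refine Finset.sum_le_sum fun i hi => ?_
    have := hl i hi
    grind
  refine h1.trans (Finset.card_le_card_of_injOn (fun i => if p i = U then q i else p i) ?_ ?_)
  · intro i hi
    have hi' := Finset.mem_filter.1 hi
    have hne := hl i hi'.1
    have ha := Finset.mem_image_of_mem p hi'.1
    have hb := Finset.mem_image_of_mem q hi'.1
    simp only [Finset.coe_erase, Set.mem_sdiff, Finset.mem_coe, Finset.mem_union,
      Set.mem_singleton_iff]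
    split_ifs with h
    · exact ⟨Or.inr hb, fun h' => hne (h.trans h'.symm)⟩
    · exact ⟨Or.inl ha, h⟩
  · intro i hi j hj hij
    have hi' := Finset.mem_filter.1 hi
    have hj' := Finset.mem_filter.1 hj
    refine hp i hi'.1 j hj'.1 (if p i = U then q i else p i) ?_ ?_
    · unfold flowJoin
      split_ifs with h
      · exact Or.inl ⟨h, rfl⟩
      · exact Or.inr ⟨rfl, hi'.2.resolve_left h⟩
    · unfold flowJoin
      simp only at hij
      rw [hij]
      split_ifs with h
      · exact Or.inl ⟨h, rfl⟩
      · exact Or.inr ⟨rfl, hj'.2.resolve_left h⟩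

theorem flow_main (k : ℕ) : ∀ (E : Finset ι), E.card = k → ∀ (p q : ι → α) (U : α),
    FlowNN (flowN (flowG (flowVec p q) E) (flowDeg p q E U) - flowF (flowVec p q) E) := by
  induction k using Nat.strong_induction_on with
  | _ k ih =>
  intro E hE p q U
  have ih' : ∀ E' : Finset ι, E'.card < E.card → ∀ (p q : ι → α) (U : α),
    FlowNN (flowN (flowG (flowVec p q) E') (flowDeg p q E' U) - flowF (flowVec p q) E') :=
    fun E' h => ih E'.card (hE ▸ h) E' rfl
  have hzero : flowF (flowVec p q) E = 0 → ∀ U, FlowNN (flowN (flowG (flowVec p q) E)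
      (flowDeg p q E U) - flowF (flowVec p q) E) := by
    intro h U; rw [h, sub_zero]; exact flowN_nn _ _
  -- empty
  rcases E.eq_empty_or_nonempty with rfl | hne
  · simp only [flowF_empty, flowG, Finset.card_empty, Nat.zero_sub, flowN, sub_self]
    exact FlowNN.zero
  -- loops
  by_cases hloop : ∃ e ∈ E, p e = q e
  · obtain ⟨e, he, hpq⟩ := hloop
    have hn := Finset.notMem_erase e E
    have hI := Finset.insert_erase he
    obtain ⟨h1, h2⟩ := flow_loop hn hpq
    have h3 := flowDeg_insert (p := p) (q := q) hn U
    rw [hI] at h1 h2 h3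
    have h4 := ih' (E.erase e) (Finset.card_erase_lt_of_mem he) p q U
    rw [h1, h2]
    refine (flowNN_X1.mul_left h4).trans (flowN_loop _ ?_)
    rw [h3]; split_ifs <;> omega
  push Not at hloop
  -- vertices of degree one
  by_cases hd1 : ∃ v, flowDeg p q E v = 1
  · obtain ⟨v, hv⟩ := hd1
    exact hzero (flow_deg_one hloop hv) U
  push Not at hd1
  -- vertices of degree two
  by_cases hd2 : ∃ v, flowDeg p q E v = 2
  · obtain ⟨v, hv⟩ := hd2
    obtain ⟨e, he, w, hvw, hj⟩ := flowDeg_pos (x := v) (by omega) hloop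
    have hn := Finset.notMem_erase e E
    have hI := Finset.insert_erase he
    obtain ⟨h1, h2⟩ := flow_delcon hn hvw hj
    have h3 := flowJoin_deg_left hn hvw hj
    have h3' := flowJoin_deg_left hn hvw.symm hj.symm
    have h3'' := fun hx hy => flowJoin_deg_ne (x := U) hn hx hy hj
    rw [hI] at h1 h2 h3 h3' h3''
    rcases h2 with h2 | ⟨_, h2⟩
    · exact hzero h2 U
    have h4 : flowF (flowVec p q) (E.erase e) = 0 :=
      flow_deg_one (v := v) (fun i hi => hloop i (Finset.mem_of_mem_erase hi)) (by omega)
    rw [h2, h4, zero_add, h1]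
    have h5 := flowDeg_ctr_eq (p := p) (q := q) (E := E.erase e) hvw
    by_cases hUv : U = v
    · subst hUv
      refine (ih' (E.erase e) (Finset.card_erase_lt_of_mem he) _ _ w).trans ?_
      rw [hv, flowN_small _ (d := 2) (by omega)]
      exact flowN_anti _ (Nat.zero_le _)
    · refine (ih' (E.erase e) (Finset.card_erase_lt_of_mem he) _ _ U).trans (flowN_anti _ ?_)
      by_cases hUw : U = w
      · subst hUw; omega
      · rw [flowDeg_ctr_ne hUv hUw]; exact (h3'' hUv hUw).le
  push Not at hd2
  have h3 : ∀ x, flowDeg p q E x = 0 ∨ 3 ≤ flowDeg p q E x := by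
    intro x
    have := hd1 x
    have := hd2 x
    omega
  have key : ∀ U, 3 ≤ flowDeg p q E U → FlowNN (flowN (flowG (flowVec p q) E)
      (flowDeg p q E U) - flowF (flowVec p q) E) := by
    intro U hU
    have hcount := flow_count h3 hU
    by_cases hpar : ∃ e ∈ E, ∃ e' ∈ E, e ≠ e' ∧ ∃ w, flowJoin p q e U w ∧ flowJoin p q e' U w
    · -- parallel edges at the root
      obtain ⟨e, he, e', he', hee, w, hj, hj'⟩ := hpar
      have hUw : U ≠ w := by
        rintro rfl
        rcases hj with ⟨h1, h2⟩ | ⟨h1, h2⟩ <;> exact hloop e he (h1.trans h2.symm)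
      have hn := Finset.notMem_erase e E
      have hI := Finset.insert_erase he
      obtain ⟨h1, h2⟩ := flow_delcon hn hUw.symm hj.symm
      have d1 := flowJoin_deg_left hn hUw hj
      have d2 := flowJoin_deg_left hn hUw.symm hj.symm
      rw [hI] at h1 h2 d1 d2
      rcases h2 with h2 | ⟨hg, h2⟩
      · exact hzero h2 U
      have he'' : e' ∈ E.erase e := Finset.mem_erase.2 ⟨hee.symm, he'⟩
      have hn' := Finset.notMem_erase e' (E.erase e)
      have hI' := Finset.insert_erase he''
      have hlp : (flowCtr w U ∘ p) e' = (flowCtr w U ∘ q) e' := by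
        rcases hj' with ⟨a, b⟩ | ⟨a, b⟩ <;> simp [flowCtr, a, b]
      obtain ⟨h4, h5⟩ := flow_loop (p := flowCtr w U ∘ p) (q := flowCtr w U ∘ q) hn' hlp
      have d3 := flowDeg_insert (p := flowCtr w U ∘ p) (q := flowCtr w U ∘ q) hn' U
      rw [hI'] at h4 h5 d3
      have d4 := flowDeg_ctr_eq (p := p) (q := q) (E := E.erase e) hUw.symm
      have hw3 : 3 ≤ flowDeg p q E w := by
        rcases h3 w with h | h <;> omega
      have c1 := Finset.card_erase_lt_of_mem he
      have c2 := Finset.card_erase_lt_of_mem he''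
      have i1 := ih' (E.erase e) c1 p q U
      have i2 := ih' ((E.erase e).erase e') (c2.trans c1) (flowCtr w U ∘ p) (flowCtr w U ∘ q) U
      rw [h2, h5]
      set D := flowDeg p q E U with hD
      have i1' := i1.trans (flowN_anti _ (show D - 1 ≤ _ by omega))
      have i2' := i2.trans (flowN_anti _ (show D - 1 ≤ _ by split_ifs at d3 <;> omega))
      obtain ⟨g, hg0⟩ : ∃ g, flowG (flowVec p q) (E.erase e) = g + 1 :=
        ⟨flowG (flowVec p q) (E.erase e) - 1, by omega⟩
      have hg1 : flowG (flowVec (flowCtr w U ∘ p) (flowCtr w U ∘ q)) ((E.erase e).erase e')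
        = g + 1 := by omega
      rw [hg1] at i2'
      rw [hg0] at i1' hg
      rw [hg]
      have := (i1'.add (flowNN_X1.mul_left i2')).add (flowN_par g (d := D) (d' := D - 1) (by omega))
      convert this using 1; ring
    · push Not at hpar
      have hs := flow_count_simple (U := U) hloop (fun e he e' he' w h h' => by
        by_contra hc; exact hpar e he e' he' hc w h h')
      obtain ⟨e, he, w, hUw, hj⟩ := flowDeg_pos (x := U) (by omega) hloop
      have hn := Finset.notMem_erase e E
      have hI := Finset.insert_erase he
      obtain ⟨h1, h2⟩ := flow_delcon hn hUw.symm hj.symm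
      have d1 := flowJoin_deg_left hn hUw hj
      have d2 := flowJoin_deg_left hn hUw.symm hj.symm
      rw [hI] at h1 h2 d1 d2
      rcases h2 with h2 | ⟨hg, h2⟩
      · exact hzero h2 U
      have d4 := flowDeg_ctr_eq (p := p) (q := q) (E := E.erase e) hUw.symm
      have hw3 : 3 ≤ flowDeg p q E w := by
        rcases h3 w with h | h <;> omega
      have c1 := Finset.card_erase_lt_of_mem he
      have i1 := ih' (E.erase e) c1 p q U
      have i2 := ih' (E.erase e) c1 (flowCtr w U ∘ p) (flowCtr w U ∘ q) U
      rw [← h1, hg] at i2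
      rw [h2, hg]
      have := (i1.add i2).add (flowN_con (flowG (flowVec p q) (E.erase e)) hU (by omega)
        (show flowDeg p q E U + 1 ≤ flowDeg (flowCtr w U ∘ p) (flowCtr w U ∘ q) (E.erase e) U by
          omega) (show flowDeg p q E U ≤ flowDeg p q (E.erase e) U + 1 by omega))
      convert this using 1; ring
  rcases h3 U with h | h
  · obtain ⟨e, he⟩ := hne
    have hpe : 3 ≤ flowDeg p q E (p e) := by
      rcases h3 (p e) with h' | h'
      · exact absurd rfl (flowDeg_eq_zero h' he).1
      · exact h'
    refine (key (p e) hpe).trans (flowN_anti _ ?_)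
    omega
  · exact key U h

end FlowGraph

section FlowLink

variable {V : Type} [Fintype V]

lemma flow_link [DecidableEq V] (p q : Sym2 V → V) (hpq : ∀ e, s(p e, q e) = e)
    (Z : Finset (Sym2 V)) :
    flowR (flowVec p q) Z +
      Nat.card (SimpleGraph.fromEdgeSet (↑Z : Set (Sym2 V))).ConnectedComponent
      = Fintype.card V := by
  classical
  set H := SimpleGraph.fromEdgeSet (↑Z : Set (Sym2 V)) with hH
  set S := Submodule.span ℚ (flowVec p q '' (Z : Set (Sym2 V))) with hS
  have hadj : ∀ a b, H.Adj a b →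
      (Finsupp.single a 1 - Finsupp.single b 1 : V →₀ ℚ) ∈ S := by
    intro a b hab
    rw [hH, SimpleGraph.fromEdgeSet_adj] at hab
    have hm : flowVec p q s(a, b) ∈ S := Submodule.subset_span ⟨_, hab.1, rfl⟩
    have h := hpq s(a, b)
    rw [Sym2.eq_iff] at h
    rcases h with ⟨h1, h2⟩ | ⟨h1, h2⟩
    · rw [flowVec, h1, h2] at hm; exact hm
    · rw [flowVec, h1, h2] at hm
      rw [← neg_sub]; exact Submodule.neg_mem _ hm
  have hreach : ∀ a b, H.Reachable a b →
      (Finsupp.single a 1 - Finsupp.single b 1 : V →₀ ℚ) ∈ S := by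
    rintro a b ⟨w⟩
    induction w with
    | nil => rw [sub_self]; exact Submodule.zero_mem _
    | cons h _ ih =>
      have := Submodule.add_mem _ (hadj _ _ h) ih
      rwa [sub_add_sub_cancel] at this
  let L : (V →₀ ℚ) →ₗ[ℚ] (H.ConnectedComponent →₀ ℚ) :=
    Finsupp.lmapDomain ℚ ℚ H.connectedComponentMk
  have hout : ∀ c : H.ConnectedComponent, ∃ a, H.connectedComponentMk a = c := fun c =>
    Quot.exists_rep c
  choose rep hrep using hout
  have hker : LinearMap.ker L = S := by
    apply le_antisymm
    · intro x hx
      have hx' : Finsupp.mapDomain H.connectedComponentMk x = 0 := hx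
      have h1 : ∀ y : V →₀ ℚ,
          y - Finsupp.mapDomain rep (Finsupp.mapDomain H.connectedComponentMk y) ∈ S := by
        intro y
        induction y using Finsupp.induction_linear with
        | zero => simp
        | add y z hy hz =>
          rw [Finsupp.mapDomain_add, Finsupp.mapDomain_add, add_sub_add_comm]
          exact Submodule.add_mem _ hy hz
        | single a c =>
          rw [Finsupp.mapDomain_single, Finsupp.mapDomain_single]
          have h2 : H.Reachable a (rep (H.connectedComponentMk a)) :=
            SimpleGraph.ConnectedComponent.exact (hrep _).symm
          have h3 := Submodule.smul_mem S c (hreach _ _ h2)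
          simpa [smul_sub] using h3
      have h2 := h1 x
      rwa [hx', Finsupp.mapDomain_zero, sub_zero] at h2
    · rw [hS, Submodule.span_le]
      rintro _ ⟨e, he, rfl⟩
      have hc : H.connectedComponentMk (p e) = H.connectedComponentMk (q e) := by
        by_cases heq : p e = q e
        · rw [heq]
        · refine SimpleGraph.ConnectedComponent.sound (SimpleGraph.Adj.reachable ?_)
          rw [hH, SimpleGraph.fromEdgeSet_adj, hpq]
          exact ⟨he, heq⟩
      rw [SetLike.mem_coe, LinearMap.mem_ker, flowVec, map_sub]
      simp [L, Finsupp.mapDomain_single, hc]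
  have hsurj : Function.Surjective L := by
    intro y
    refine ⟨Finsupp.mapDomain rep y, ?_⟩
    change Finsupp.mapDomain _ (Finsupp.mapDomain rep y) = y
    rw [← Finsupp.mapDomain_comp]
    have : H.connectedComponentMk ∘ rep = id := funext hrep
    rw [this, Finsupp.mapDomain_id]
  have h1 := LinearMap.finrank_range_add_finrank_ker L
  rw [LinearMap.range_eq_top.2 hsurj, finrank_top, hker] at h1
  have hfin : Fintype H.ConnectedComponent := Fintype.ofFinite _
  rw [Module.finrank_finsupp_self, Module.finrank_finsupp_self] at h1
  rw [Nat.card_eq_fintype_card]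
  change Module.finrank ℚ S + _ = _
  omega

lemma flow_coeff [DecidableEq V] (G : SimpleGraph V) (p q : Sym2 V → V)
    (hpq : ∀ e, s(p e, q e) = e) (i : ℕ) :
    |(flowPoly G).coeff i| = (flowF (flowVec p q) G.edgeSet.toFinite.toFinset).coeff i := by
  set E := G.edgeSet.toFinite.toFinset with hE
  have h : (flowPoly G).coeff i = (-1) ^ (E.card + flowR (flowVec p q) E + i) *
      (flowF (flowVec p q) E).coeff i := by
    unfold flowPoly flowF
    rw [finsetSum_coeff, finsetSum_coeff, Finset.mul_sum]
    refine Finset.sum_congr rfl fun Z hZ => ?_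
    have hl := flow_link p q hpq Z
    have hr := flowR_le (flowVec p q) Z
    have hc := Finset.card_le_card (Finset.mem_powerset.1 hZ)
    rw [← hE]
    have he : Z.card + Nat.card (SimpleGraph.fromEdgeSet (↑Z : Set (Sym2 V))).ConnectedComponent
          - Fintype.card V = Z.card - flowR (flowVec p q) Z := by omega
    rw [he, coeff_smul, smul_eq_mul]
    have hcast : ((-1 : ℤ[X]) ^ (flowR (flowVec p q) E + flowR (flowVec p q) Z)) =
      C ((-1 : ℤ) ^ (flowR (flowVec p q) E + flowR (flowVec p q) Z)) := by simp
    rw [hcast, coeff_C_mul, coeff_X_pow]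
    split_ifs with hi
    · rw [mul_one, mul_one, ← pow_add]
      apply neg_one_pow_congr
      rw [Nat.even_sub hc]
      subst hi
      have : E.card + flowR (flowVec p q) E + (Z.card - flowR (flowVec p q) Z) +
        (flowR (flowVec p q) E + flowR (flowVec p q) Z) =
        E.card + Z.card + 2 * flowR (flowVec p q) E := by omega
      rw [this]
      simp [Nat.even_add]
    · simp
  rw [h, abs_mul, abs_pow, abs_neg, abs_one, one_pow, one_mul]
  exact abs_of_nonneg (flowF_nn _ _ i)

end FlowLink

/-- Dong–Koh type upper bound on the coefficients of the flow polynomial, improved. -/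
theorem stmt_0 {V : Type} [Fintype V] (G : SimpleGraph V)
    (hconn : G.Connected) (hbridgeless : ∀ e : Sym2 V, ¬ G.IsBridge e)
    (n m : ℕ) (hn : n = Fintype.card V) (hm : m = edgeCount G)
    (d : Polynomial ℤ)
    (hd : d = if m ≤ n + 3 then ∏ j ∈ Finset.Icc 1 (m - n + 1), (X + C (j : ℤ))
              else (X + 1) * (X + 2) * (X + 3) ^ 2 * (X + 4) ^ (m - n - 3)) :
    ∀ i ≤ m - n + 1, |(flowPoly G).coeff i| ≤ d.coeff i := by
  classical
  intro i _
  have hex : ∀ e : Sym2 V, ∃ ab : V × V, s(ab.1, ab.2) = e := fun e => by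
    induction e with | _ a b => exact ⟨(a, b), rfl⟩
  choose pq hpq using hex
  set p : Sym2 V → V := fun e => (pq e).1 with hp
  set q : Sym2 V → V := fun e => (pq e).2 with hq
  rw [flow_coeff G p q hpq i]
  set E := G.edgeSet.toFinite.toFinset with hE
  have hmE : m = E.card := hm
  have hl := flow_link p q hpq E
  have hG : SimpleGraph.fromEdgeSet (↑E : Set (Sym2 V)) = G := by
    rw [hE, Set.Finite.coe_toFinset, SimpleGraph.fromEdgeSet_edgeSet]
  have hcc : Nat.card G.ConnectedComponent = 1 := by
    rw [Nat.card_eq_one_iff_unique]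
    exact ⟨hconn.preconnected.subsingleton_connectedComponent,
      ⟨G.connectedComponentMk hconn.nonempty.some⟩⟩
  rw [hG, hcc, ← hn] at hl
  have hr := flowR_le (flowVec p q) E
  have hmain := flow_main E.card E rfl p q hconn.nonempty.some
  have hmain := hmain.trans (flowN_anti _ (Nat.zero_le _))
  have hg : flowG (flowVec p q) E = m - flowR (flowVec p q) E := by rw [hmE]; rfl
  suffices hfin : FlowNN (d - flowN (flowG (flowVec p q) E) 0) by
    have := hmain.trans hfin i
    rw [coeff_sub] at this
    linarith
  generalize flowG (flowVec p q) E = g at *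
  by_cases hmn : m ≤ n + 3
  · rw [if_pos hmn] at hd
    obtain rfl | ⟨k, hk⟩ : g = 0 ∨ ∃ k, g = k + 1 := by
      cases g
      · exact Or.inl rfl
      · exact Or.inr ⟨_, rfl⟩
    · have : m - n + 1 = 1 := by omega
      rw [hd, this]
      simp [flowN]
      exact FlowNN.X
    · have : m - n + 1 = k + 1 := by omega
      rw [hd, this, hk]
      have hk3 : k ≤ 3 := by omega
      interval_cases k
      · simp [flowN]
        exact FlowNN.zero
      · have e : ∏ j ∈ Finset.Icc (1 : ℕ) (1 + 1), (X + C (j : ℤ)) = (X + 1) * (X + 2) := by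
          rw [show Finset.Icc (1 : ℕ) (1 + 1) = {1,2} by decide]
          simp <;> ring
        rw [e]
        simp only [flowN, flowA_zero_left]
        convert FlowNN.zero using 1; ring
      · have e : ∏ j ∈ Finset.Icc (1 : ℕ) (2 + 1), (X + C (j : ℤ)) = (X + 1) * (X + 2) * (X + 3) := by
          rw [show Finset.Icc (1 : ℕ) (2 + 1) = {1,2,3} by decide]
          simp <;> ring
        rw [e]
        have e2 : flowN 3 0 = (X + 1) * (X + 2) * flowA 1 1 := by
          simp only [flowN]; rw [flowA_top (by omega)]
        have e3 : flowA 1 1 = X + 3 := by simp [flowA]; ring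
        change FlowNN (_ - flowN 3 0)
        rw [e2, e3]
        convert FlowNN.zero using 1; ring
      · have e : ∏ j ∈ Finset.Icc (1 : ℕ) (3 + 1), (X + C (j : ℤ)) =
            (X + 1) * (X + 2) * (X + 3) * (X + 4) := by
          rw [show Finset.Icc (1 : ℕ) (3 + 1) = {1,2,3,4} by decide]
          simp <;> ring
        rw [e]
        have e2 : flowN 4 0 = (X + 1) * (X + 2) * flowA 2 2 := by
          simp only [flowN]; rw [flowA_top (by omega)]
        change FlowNN (_ - flowN 4 0)
        rw [e2, flowA_22]
        convert flowNN_12.mul flowNN_X2 using 1; ring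
  · rw [if_neg hmn] at hd
    obtain ⟨k, hk⟩ : ∃ k, m = n + 4 + k := ⟨m - n - 4, by omega⟩
    have h1 : g = k + 3 + 2 := by omega
    have h2 : m - n - 3 = k + 1 := by omega
    rw [hd, h1, h2]
    simp only [flowN]
    rw [flowA_top (by omega)]
    convert flowNN_12.mul (flowA_final k) using 1; ring
end

section
/- Let G be a connected bridgeless finite simple cubic graph with n vertices and m edges (so n is even and n ≥ 4). Then τ(G,t) = (−1)^{m−n+1} F(G,−t) is a polynomial of degree n/2 + 1, and every coefficient of τ(G,t) is at most the corresponding coefficient of: (t+1)(t+2)(t+3) if n = 4; (t+1)(t+2)(t+3)(t+4) if n = 6; and (t+1)(t+2)(t+3)^2(t+4)^{(n−6)/2} if n ≥ 8. -/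
open Polynomial

/-- `τ(G,t) = (−1)^{m−n+1} F(G,−t)`. -/
noncomputable def tauPoly {V : Type} [Fintype V] (G : SimpleGraph V) : Polynomial ℤ :=
  (-1 : Polynomial ℤ) ^ (edgeCount G - Fintype.card V + 1) * (flowPoly G).comp (-X)

section FlowAux

set_option linter.unusedSectionVars false

variable {V ε : Type}

/-- spanning simple graph of a multigraph restricted to the edges `Z` -/
def gr (s t : ε → V) (Z : Finset ε) : SimpleGraph V :=
  SimpleGraph.fromEdgeSet ((fun e => s(s e, t e)) '' (Z : Set ε))

lemma gr_reach_edge (s t : ε → V) (Z : Finset ε) {e : ε} (he : e ∈ Z) :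
    (gr s t Z).Reachable (s e) (t e) := by
  by_cases h : s e = t e
  · rw [h]
  · apply SimpleGraph.Adj.reachable
    rw [gr, SimpleGraph.fromEdgeSet_adj]
    exact ⟨⟨e, he, rfl⟩, h⟩

lemma gr_adj {s t : ε → V} {Z : Finset ε} {a b : V} (h : (gr s t Z).Adj a b) :
    a ≠ b ∧ ∃ e ∈ Z, (s e = a ∧ t e = b) ∨ (s e = b ∧ t e = a) := by
  rw [gr, SimpleGraph.fromEdgeSet_adj] at h
  obtain ⟨⟨e, he, h1⟩, h2⟩ := h
  refine ⟨h2, e, he, ?_⟩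
  simpa using h1

lemma gr_inv {α : Type*} {s t : ε → V} {Z : Finset ε} (g : V → α)
    (h : ∀ e ∈ Z, g (s e) = g (t e)) {a b : V} (hr : (gr s t Z).Reachable a b) : g a = g b := by
  obtain ⟨p⟩ := hr
  induction p with
  | nil => rfl
  | cons hadj _ ih =>
    rw [← ih]
    obtain ⟨_, e, he, ⟨rfl, rfl⟩ | ⟨rfl, rfl⟩⟩ := gr_adj hadj
    · exact h e he
    · exact (h e he).symm

/-- reachability transfer -/
lemma gr_transfer {s t s' t' : ε → V} {Z Z' : Finset ε} (g : V → V)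
    (h : ∀ e ∈ Z, (gr s' t' Z').Reachable (g (s e)) (g (t e))) {a b : V}
    (hr : (gr s t Z).Reachable a b) : (gr s' t' Z').Reachable (g a) (g b) := by
  have := gr_inv (s := s) (t := t) (Z := Z)
    (fun v => (gr s' t' Z').connectedComponentMk (g v))
    (fun e he => SimpleGraph.ConnectedComponent.sound (h e he)) hr
  exact SimpleGraph.ConnectedComponent.exact this

lemma gr_mono {s t : ε → V} {Z Z' : Finset ε} (h : Z ⊆ Z') {a b : V}
    (hr : (gr s t Z).Reachable a b) : (gr s t Z').Reachable a b :=
  gr_transfer id (fun _ he => gr_reach_edge s t Z' (h he)) hr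

/-- the edge `e` has ends `w` and `x` -/
def Inc (s t : ε → V) (e : ε) (w x : V) : Prop := (s e = w ∧ t e = x) ∨ (s e = x ∧ t e = w)

lemma Inc.symm {s t : ε → V} {e : ε} {w x : V} (h : Inc s t e w x) : Inc s t e x w := by
  unfold Inc at *; tauto

lemma Inc.reach {s t : ε → V} {e : ε} {w x : V} (h : Inc s t e w x) {Z : Finset ε} (he : e ∈ Z) :
    (gr s t Z).Reachable w x := by
  have := gr_reach_edge s t Z he
  rcases h with ⟨rfl, rfl⟩ | ⟨rfl, rfl⟩
  · exact this
  · exact this.symm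

/-- number of components -/
noncomputable def cc (s t : ε → V) (Z : Finset ε) : ℕ :=
  Nat.card (gr s t Z).ConnectedComponent

variable [DecidableEq V] [DecidableEq ε]

/-- contraction map sending `x` to `w` -/
def pim (x w v : V) : V := if v = x then w else v

lemma gr_del {s t : ε → V} {Z : Finset ε} {e : ε} {w x : V} (hi : Inc s t e w x)
    (hr : (gr s t Z).Reachable w x) {a b : V} (h : (gr s t (insert e Z)).Reachable a b) :
    (gr s t Z).Reachable a b := by
  refine gr_transfer id (fun f hf => ?_) h
  rcases Finset.mem_insert.1 hf with rfl | hf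
  · rcases hi with ⟨rfl, rfl⟩ | ⟨rfl, rfl⟩
    · exact hr
    · exact hr.symm
  · exact gr_reach_edge s t Z hf

lemma pim_reach {s t : ε → V} {Z : Finset ε} {e : ε} {w x : V} (hi : Inc s t e w x) (he : e ∈ Z)
    (v : V) : (gr s t Z).Reachable (pim x w v) v := by
  unfold pim
  split_ifs with h
  · subst h; exact hi.reach he
  · exact SimpleGraph.Reachable.refl _

lemma gr_con {s t : ε → V} {Z : Finset ε} {e : ε} {w x : V} (hi : Inc s t e w x)
    {a b : V} (h : (gr s t (insert e Z)).Reachable a b) :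
    (gr (fun f => pim x w (s f)) (fun f => pim x w (t f)) Z).Reachable (pim x w a) (pim x w b) := by
  refine gr_transfer (pim x w) (fun f hf => ?_) h
  rcases Finset.mem_insert.1 hf with rfl | hf
  · have : pim x w (s f) = pim x w (t f) := by
      rcases hi with ⟨rfl, rfl⟩ | ⟨rfl, rfl⟩ <;> simp [pim]
    rw [this]
  · exact gr_reach_edge (fun f => pim x w (s f)) (fun f => pim x w (t f)) Z hf

lemma gr_uncon {s t : ε → V} {Z : Finset ε} {e : ε} {w x : V} (hi : Inc s t e w x)
    {a b : V}
    (h : (gr (fun f => pim x w (s f)) (fun f => pim x w (t f)) Z).Reachable a b) :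
    (gr s t (insert e Z)).Reachable a b := by
  refine gr_transfer id (fun f hf => ?_) h
  have he : e ∈ insert e Z := Finset.mem_insert_self _ _
  exact ((pim_reach hi he (s f)).trans
    (gr_reach_edge s t _ (Finset.mem_insert_of_mem hf))).trans (pim_reach hi he (t f)).symm

variable [Fintype V]

lemma cc_con (s t : ε → V) (Z : Finset ε) {e : ε} {w x : V} (hi : Inc s t e w x) (hwx : w ≠ x) :
    cc (fun f => pim x w (s f)) (fun f => pim x w (t f)) Z = cc s t (insert e Z) + 1 := by
  classical
  have he : e ∈ insert e Z := Finset.mem_insert_self _ _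
  unfold cc
  rw [← Finite.card_option]
  set H := gr (fun f => pim x w (s f)) (fun f => pim x w (t f)) Z with hH
  set K := gr s t (insert e Z) with hK
  have hne : ∀ v, pim x w v ≠ x := by
    intro v; unfold pim; split_ifs with h
    · exact hwx
    · exact h
  have hx : ∀ {a b}, H.Reachable a b → (a = x) = (b = x) := by
    intro a b h
    refine gr_inv (fun v => v = x) (fun f _ => ?_) h
    simp [hne]
  let F : H.ConnectedComponent → Option K.ConnectedComponent :=
    Quot.lift (fun v => if v = x then none else some (K.connectedComponentMk v)) (by
      intro a b hab
      have h1 := hx hab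
      by_cases ha : a = x
      · have hb : b = x := by rw [← h1]; exact ha
        simp [ha, hb]
      · have hb : ¬ b = x := by rw [← h1]; exact ha
        simp only [ha, hb, if_false]
        exact congrArg some (SimpleGraph.ConnectedComponent.sound (gr_uncon hi hab)))
  have hF : ∀ v, F (H.connectedComponentMk v) =
    if v = x then none else some (K.connectedComponentMk v) := fun v => rfl
  refine Nat.card_congr (Equiv.ofBijective F ⟨?_, ?_⟩)
  · intro A B
    induction A using SimpleGraph.ConnectedComponent.ind with | _ a
    induction B using SimpleGraph.ConnectedComponent.ind with | _ b
    rw [hF, hF]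
    intro h
    by_cases ha : a = x <;> by_cases hb : b = x
    · rw [ha, hb]
    · simp [ha, hb] at h
    · simp [ha, hb] at h
    · simp only [ha, hb, if_false, Option.some.injEq] at h
      have := gr_con hi (SimpleGraph.ConnectedComponent.exact h)
      simp only [pim, ha, hb, if_false] at this
      exact SimpleGraph.ConnectedComponent.sound this
  · intro o
    cases o with
    | none => exact ⟨H.connectedComponentMk x, by rw [hF]; simp⟩
    | some A =>
      induction A using SimpleGraph.ConnectedComponent.ind with | _ a
      refine ⟨H.connectedComponentMk (pim x w a), ?_⟩
      rw [hF, if_neg (hne a)]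
      exact congrArg some (SimpleGraph.ConnectedComponent.sound (pim_reach hi he a))

lemma cc_add (s t : ε → V) (Z : Finset ε) {e : ε} {w x : V} (hi : Inc s t e w x) :
    cc s t Z ≤ cc s t (insert e Z) + 1 ∧
    (¬ (gr s t Z).Reachable w x → cc s t Z = cc s t (insert e Z) + 1) := by
  classical
  have he : e ∈ insert e Z := Finset.mem_insert_self _ _
  unfold cc
  rw [← Finite.card_option]
  set H := gr s t Z with hH
  set K := gr s t (insert e Z) with hK
  have hHK : ∀ {a b}, H.Reachable a b → K.Reachable a b :=
    fun h => gr_mono (Finset.subset_insert _ _) h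
  have key : ∀ {a b}, K.Reachable a b →
      (if H.Reachable a x then H.connectedComponentMk w else H.connectedComponentMk a) =
      (if H.Reachable b x then H.connectedComponentMk w else H.connectedComponentMk b) := by
    intro a b h
    refine gr_inv (fun a => if H.Reachable a x then H.connectedComponentMk w
      else H.connectedComponentMk a) (fun f hf => ?_) h
    rcases Finset.mem_insert.1 hf with rfl | hf
    · rcases hi with ⟨rfl, rfl⟩ | ⟨rfl, rfl⟩ <;> simp
    · have h1 := gr_reach_edge s t Z hf
      have h2 : H.Reachable (s f) x ↔ H.Reachable (t f) x :=
        ⟨fun h => h1.symm.trans h, fun h => h1.trans h⟩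
      simp only [h2]
      rw [SimpleGraph.ConnectedComponent.sound h1]
  let F : H.ConnectedComponent → Option K.ConnectedComponent :=
    Quot.lift (fun v => if H.Reachable v x then none else some (K.connectedComponentMk v)) (by
      intro a b hab
      have h2 : H.Reachable a x ↔ H.Reachable b x :=
        ⟨fun h => (SimpleGraph.Reachable.symm hab).trans h, fun h => SimpleGraph.Reachable.trans hab h⟩
      simp only [h2]
      rw [SimpleGraph.ConnectedComponent.sound (hHK hab)])
  have hF : ∀ v, F (H.connectedComponentMk v) =
    if H.Reachable v x then none else some (K.connectedComponentMk v) := fun v => rfl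
  have hinj : Function.Injective F := by
    intro A B
    induction A using SimpleGraph.ConnectedComponent.ind with | _ a
    induction B using SimpleGraph.ConnectedComponent.ind with | _ b
    rw [hF, hF]
    intro h
    by_cases ha : H.Reachable a x <;> by_cases hb : H.Reachable b x
    · exact SimpleGraph.ConnectedComponent.sound (ha.trans hb.symm)
    · simp [ha, hb] at h
    · simp [ha, hb] at h
    · simp only [ha, hb, if_false, Option.some.injEq] at h
      have := key (SimpleGraph.ConnectedComponent.exact h)
      simpa only [ha, hb, if_false] using this
  refine ⟨Nat.card_le_card_of_injective F hinj, fun hn => ?_⟩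
  refine Nat.card_congr (Equiv.ofBijective F ⟨hinj, ?_⟩)
  intro o
  cases o with
  | none => exact ⟨H.connectedComponentMk x, by rw [hF]; simp⟩
  | some A =>
    induction A using SimpleGraph.ConnectedComponent.ind with | _ a
    by_cases ha : H.Reachable a x
    · refine ⟨H.connectedComponentMk w, ?_⟩
      rw [hF, if_neg hn]
      exact congrArg some (SimpleGraph.ConnectedComponent.sound
        ((hi.reach he).trans (hHK ha).symm))
    · exact ⟨H.connectedComponentMk a, by rw [hF, if_neg ha]⟩

lemma gr_loop {s t : ε → V} (Z : Finset ε) {e : ε} (h : s e = t e) :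
    gr s t (insert e Z) = gr s t Z := by
  ext a b
  simp only [gr, SimpleGraph.fromEdgeSet_adj]
  constructor
  · rintro ⟨⟨f, hf, h1⟩, hab⟩
    refine ⟨⟨f, ?_, h1⟩, hab⟩
    rcases Finset.mem_insert.1 (Finset.mem_coe.1 hf) with rfl | hf
    · exfalso; apply hab
      simp only [h] at h1
      simp at h1
      rcases h1 with ⟨rfl, rfl⟩ | ⟨rfl, rfl⟩ <;> rfl
    · exact hf
  · rintro ⟨⟨f, hf, h1⟩, hab⟩
    exact ⟨⟨f, Finset.mem_coe.2 (Finset.mem_insert_of_mem hf), h1⟩, hab⟩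

lemma cc_empty (s t : ε → V) : cc s t ∅ = Fintype.card V := by
  unfold cc
  rw [← Nat.card_eq_fintype_card]
  refine (Nat.card_congr (Equiv.ofBijective (gr s t ∅).connectedComponentMk ⟨?_, ?_⟩)).symm
  · intro a b h
    exact gr_inv (s := s) (t := t) (Z := ∅) id (by simp) (SimpleGraph.ConnectedComponent.exact h)
  · intro A
    induction A using SimpleGraph.ConnectedComponent.ind with | _ a
    exact ⟨a, rfl⟩

lemma card_le (Z : Finset ε) : ∀ s t : ε → V, Fintype.card V ≤ Z.card + cc s t Z := by
  induction Z using Finset.induction_on with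
  | empty => intro s t; rw [cc_empty]; simp
  | insert e Z he ih =>
    intro s t
    rw [Finset.card_insert_of_notMem he]
    by_cases h : s e = t e
    · have := ih s t
      rw [cc, gr_loop Z h, ← cc]; omega
    · have h1 := cc_con s t Z (e := e) (Or.inl ⟨rfl, rfl⟩) h
      have := ih (fun f => pim (t e) (s e) (s f)) (fun f => pim (t e) (s e) (t f))
      omega

/-- nullity -/
noncomputable def nul (s t : ε → V) (Z : Finset ε) : ℕ := Z.card + cc s t Z - Fintype.card V

lemma nul_con (s t : ε → V) (Z : Finset ε) {e : ε} (heZ : e ∉ Z) {w x : V} (hi : Inc s t e w x)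
    (hwx : w ≠ x) :
    nul s t (insert e Z) = nul (fun f => pim x w (s f)) (fun f => pim x w (t f)) Z := by
  unfold nul
  rw [cc_con s t Z hi hwx, Finset.card_insert_of_notMem heZ]; congr 1; ring

lemma nul_loop (s t : ε → V) (Z : Finset ε) {e : ε} (heZ : e ∉ Z) (h : s e = t e) :
    nul s t (insert e Z) = nul s t Z + 1 := by
  have := card_le Z s t
  unfold nul
  rw [Finset.card_insert_of_notMem heZ, cc, gr_loop Z h, ← cc]; omega

lemma nul_bridge (s t : ε → V) (Z : Finset ε) {e : ε} (heZ : e ∉ Z) {w x : V} (hi : Inc s t e w x)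
    (hn : ¬ (gr s t Z).Reachable w x) :
    nul s t (insert e Z) = nul s t Z := by
  unfold nul
  rw [(cc_add s t Z hi).2 hn, Finset.card_insert_of_notMem heZ]; congr 1; ring

lemma nul_insert (s t : ε → V) (Z : Finset ε) {e : ε} (heZ : e ∉ Z) :
    nul s t Z ≤ nul s t (insert e Z) := by
  unfold nul
  have := (cc_add s t Z (e := e) (Or.inl ⟨rfl, rfl⟩)).1
  rw [Finset.card_insert_of_notMem heZ]; omega

lemma nul_mono (s t : ε → V) {Z Z' : Finset ε} (h : Z ⊆ Z') : nul s t Z ≤ nul s t Z' := by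
  have key : ∀ W : Finset ε, nul s t Z ≤ nul s t (W ∪ Z) := by
    intro W
    induction W using Finset.induction_on with
    | empty => simp
    | insert e W he ih =>
      rw [Finset.insert_union]
      by_cases hz : e ∈ W ∪ Z
      · rw [Finset.insert_eq_of_mem hz]; exact ih
      · exact ih.trans (nul_insert s t _ hz)
  have := key Z'
  rwa [Finset.union_eq_left.2 h] at this

/-- signed flow polynomial -/
noncomputable def FF (s t : ε → V) (E : Finset ε) : ℤ[X] :=
  ∑ Z ∈ E.powerset, (-1) ^ Z.card * X ^ nul s t Z

lemma FF_insert (s t : ε → V) (E : Finset ε) {e : ε} (he : e ∉ E) :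
    FF s t (insert e E) = FF s t E - ∑ Z ∈ E.powerset, (-1) ^ Z.card * X ^ nul s t (insert e Z) := by
  unfold FF
  rw [Finset.sum_powerset_insert he, sub_eq_add_neg, ← Finset.sum_neg_distrib]
  congr 1
  refine Finset.sum_congr rfl (fun Z hZ => ?_)
  have : e ∉ Z := fun h => he (Finset.mem_powerset.1 hZ h)
  rw [Finset.card_insert_of_notMem this]; ring

lemma FF_con (s t : ε → V) (E : Finset ε) {e : ε} (he : e ∉ E) {w x : V} (hi : Inc s t e w x)
    (hwx : w ≠ x) : FF s t (insert e E) =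
      FF s t E - FF (fun f => pim x w (s f)) (fun f => pim x w (t f)) E := by
  rw [FF_insert s t E he]
  congr 1
  refine Finset.sum_congr rfl (fun Z hZ => ?_)
  have : e ∉ Z := fun h => he (Finset.mem_powerset.1 hZ h)
  rw [nul_con s t Z this hi hwx]

lemma FF_loop (s t : ε → V) (E : Finset ε) {e : ε} (he : e ∉ E) (h : s e = t e) :
    FF s t (insert e E) = FF s t E - FF s t E * X := by
  rw [FF_insert s t E he]
  congr 1
  unfold FF
  rw [Finset.sum_mul]
  refine Finset.sum_congr rfl (fun Z hZ => ?_)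
  have : e ∉ Z := fun h => he (Finset.mem_powerset.1 hZ h)
  rw [nul_loop s t Z this h]; ring

lemma FF_bridge (s t : ε → V) (E : Finset ε) {e : ε} (he : e ∉ E) {w x : V} (hi : Inc s t e w x)
    (hn : ¬ (gr s t E).Reachable w x) : FF s t (insert e E) = 0 := by
  rw [FF_insert s t E he, sub_eq_zero]
  refine Finset.sum_congr rfl (fun Z hZ => ?_)
  have : e ∉ Z := fun h => he (Finset.mem_powerset.1 hZ h)
  rw [nul_bridge s t Z this hi (fun h => hn (gr_mono (Finset.mem_powerset.1 hZ) h))]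

end FlowAux

section PolyAux

/-- all coefficients nonnegative -/
def Nn (P : ℤ[X]) : Prop := ∀ i, 0 ≤ P.coeff i

lemma Nn.add {P Q : ℤ[X]} (hP : Nn P) (hQ : Nn Q) : Nn (P + Q) := fun i => by
  rw [coeff_add]; exact add_nonneg (hP i) (hQ i)

lemma Nn.mul {P Q : ℤ[X]} (hP : Nn P) (hQ : Nn Q) : Nn (P * Q) := fun i => by
  rw [coeff_mul]; exact Finset.sum_nonneg (fun p _ => mul_nonneg (hP _) (hQ _))

lemma Nn_zero : Nn 0 := fun i => by simp
lemma Nn_one : Nn 1 := fun i => by rw [coeff_one]; split_ifs <;> simp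
lemma Nn_X : Nn X := fun i => by rw [coeff_X]; split_ifs <;> simp

lemma Nn.pow {P : ℤ[X]} (hP : Nn P) (k : ℕ) : Nn (P ^ k) := by
  induction k with
  | zero => simpa using Nn_one
  | succ k ih => rw [pow_succ]; exact ih.mul hP

lemma Nn_ofNat (k : ℕ) : Nn (k : ℤ[X]) := by
  induction k with
  | zero => simpa using Nn_zero
  | succ k ih => rw [Nat.cast_succ]; exact ih.add Nn_one

lemma Nn_lin (k : ℕ) : Nn (X + (k : ℤ[X])) := Nn_X.add (Nn_ofNat k)

lemma Nn_X1 : Nn (X + 1) := by simpa using Nn_lin 1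

/-- the bounding polynomials -/
noncomputable def RR : ℕ → ℕ → ℤ[X]
  | 0, d => if d = 1 then 0 else (X + 1) ^ (d / 2)
  | r + 1, d => if d = 1 then 0 else if d ≤ 2 then RR r 3 else RR r (d - 1) + RR r (d + 1)

lemma RR_big (r d : ℕ) : RR (r + 1) (d + 3) = RR r (d + 2) + RR r (d + 4) := by
  rw [RR]; simp

lemma RR_two (r : ℕ) : RR (r + 1) 2 = RR r 3 := by
  rw [RR]; simp

lemma RR_zero (d : ℕ) : RR 0 (d + 2) = (X + 1) ^ (d / 2 + 1) := by
  rw [RR]; simp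

lemma RR_one (r : ℕ) : RR r 1 = 0 := by
  cases r <;> (rw [RR]; simp)

lemma RR_nn (r d : ℕ) : Nn (RR r d) := by
  induction r generalizing d with
  | zero =>
    rw [RR]; split_ifs
    · exact Nn_zero
    · exact Nn_X1.pow _
  | succ r ih =>
    rw [RR]; split_ifs
    · exact Nn_zero
    · exact ih _
    · exact (ih _).add (ih _)

lemma RR_loop (r d : ℕ) : Nn (RR r (d + 4) - (X + 1) * RR r (d + 2)) := by
  induction r generalizing d with
  | zero =>
    rw [show d + 4 = (d + 2) + 2 from rfl, RR_zero, RR_zero,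
      show (d + 2) / 2 = d / 2 + 1 by omega]
    convert Nn_zero using 1; ring
  | succ r ih =>
    cases d with
    | zero =>
      rw [show 0 + 4 = 1 + 3 from rfl, RR_big, show 0 + 2 = 2 from rfl, RR_two]
      have h1 := ih 1
      have h2 := RR_nn r 3
      convert h1.add h2 using 1
      norm_num; ring
    | succ d =>
      rw [show d + 1 + 4 = (d + 2) + 3 from rfl, RR_big, show d + 1 + 2 = d + 3 from rfl, RR_big]
      convert (ih d).add (ih (d + 2)) using 1
      ring_nf

lemma RR_grow (r d : ℕ) : Nn ((X + 4) * RR r (d + 2) - RR (r + 2) (d + 2)) := by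
  induction r generalizing d with
  | zero =>
    match d with
    | 0 =>
      convert (Nn_X1.mul (Nn_ofNat 2)) using 1
      simp [RR]; ring
    | 1 =>
      convert Nn_X1 using 1
      simp [RR]; ring
    | d + 2 =>
      rw [show d + 2 + 2 = (d + 1) + 3 from rfl, RR_big, show d + 1 + 2 = d + 3 from rfl, RR_big,
        show d + 1 + 4 = d + 2 + 3 from rfl, RR_big, show d + 1 + 3 = (d + 2) + 2 from rfl,
        show d + 4 = (d + 2) + 2 from rfl,
        show d + 2 + 4 = (d + 4) + 2 from rfl, RR_zero, RR_zero, RR_zero,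
        show (d + 2) / 2 = d / 2 + 1 by omega, show (d + 4) / 2 = d / 2 + 2 by omega]
      convert (Nn_X1.pow (d / 2 + 1)).mul Nn_X using 1
      ring
  | succ r ih =>
    cases d with
    | zero =>
      rw [show 0 + 2 = 2 from rfl, RR_two, RR_two]
      exact ih 1
    | succ d =>
      rw [show d + 1 + 2 = d + 3 from rfl, RR_big, RR_big]
      convert (ih d).add (ih (d + 2)) using 1
      ring_nf

lemma RR33 : RR 3 3 = (X + 1) * (X + 2) * (X + 3) := by
  simp [RR]; ring
lemma RR53 : RR 5 3 = (X + 1) * (X + 2) * (X ^ 2 + 6 * X + 10) := by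
  simp [RR]; ring
lemma RR73 : RR 7 3 = (X + 1) * (X + 2) * (X ^ 3 + 9 * X ^ 2 + 29 * X + 35) := by
  simp [RR]; ring

lemma RR_final (n : ℕ) (he : Even n) (hn : 4 ≤ n) : Nn
    ((if n = 4 then (X + 1) * (X + 2) * (X + 3)
          else if n = 6 then (X + 1) * (X + 2) * (X + 3) * (X + 4)
          else (X + 1) * (X + 2) * (X + 3) ^ 2 * (X + 4) ^ ((n - 6) / 2)) - RR (n - 1) 3) := by
  have h12 : Nn ((X + 1) * (X + 2)) := Nn_X1.mul (by simpa using Nn_lin 2)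
  have h4 : Nn (X + 4) := by simpa using Nn_lin 4
  split_ifs with h1 h2
  · subst h1
    rw [show 4 - 1 = 3 from rfl, RR33, sub_self]; exact Nn_zero
  · subst h2
    rw [show 6 - 1 = 5 from rfl, RR53]
    convert h12.mul (Nn_lin 2) using 1
    push_cast; ring
  · obtain ⟨j, rfl⟩ : ∃ j, n = 8 + 2 * j := by
      obtain ⟨k, rfl⟩ := he
      exact ⟨k - 4, by omega⟩
    rw [show (8 + 2 * j - 6) / 2 = j + 1 by omega, show 8 + 2 * j - 1 = 7 + 2 * j by omega]
    clear h1 h2 he hn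
    induction j with
    | zero =>
      rw [show 7 + 2 * 0 = 7 from rfl, RR73]
      convert h12.mul (((Nn_X.pow 2).add ((Nn_ofNat 4).mul Nn_X)).add (Nn_ofNat 1)) using 1
      push_cast; ring
    | succ j ih =>
      rw [show 7 + 2 * (j + 1) = 7 + 2 * j + 2 by ring]
      convert (h4.mul ih).add (RR_grow (7 + 2 * j) 1) using 1
      ring

end PolyAux

section MainAux

set_option linter.unusedSectionVars false

variable {V ε : Type} [DecidableEq V] [DecidableEq ε]

/-- degree (loops count twice) -/
def dg (s t : ε → V) (E : Finset ε) (v : V) : ℕ :=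
  ∑ e ∈ E, ((if s e = v then 1 else 0) + (if t e = v then 1 else 0))

lemma dg_insert (s t : ε → V) {E : Finset ε} {e : ε} (he : e ∉ E) (v : V) :
    dg s t (insert e E) v =
      ((if s e = v then 1 else 0) + (if t e = v then 1 else 0)) + dg s t E v := by
  unfold dg; rw [Finset.sum_insert he]

lemma dg_insert_inc {s t : ε → V} {E : Finset ε} {e : ε} (he : e ∉ E) {w x : V}
    (hi : Inc s t e w x) (v : V) :
    dg s t (insert e E) v =
      ((if w = v then 1 else 0) + (if x = v then 1 else 0)) + dg s t E v := by
  rw [dg_insert s t he]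
  rcases hi with ⟨rfl, rfl⟩ | ⟨rfl, rfl⟩
  · rfl
  · ring

lemma dg_zero {s t : ε → V} {E : Finset ε} {v : V} (h : dg s t E v = 0) :
    ∀ e ∈ E, s e ≠ v ∧ t e ≠ v := by
  intro e he
  have := (Finset.sum_eq_zero_iff.1 h) e he
  constructor
  · intro h1; simp [h1] at this
  · intro h1; simp [h1] at this

lemma dg_pos {s t : ε → V} {E : Finset ε} {v : V} (h : dg s t E v ≠ 0) :
    ∃ e ∈ E, s e = v ∨ t e = v := by
  by_contra hc
  push Not at hc
  apply h
  refine Finset.sum_eq_zero (fun e he => ?_)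
  simp [hc e he]

lemma dg_zero_reach {s t : ε → V} {E : Finset ε} {v y : V} (h : dg s t E v = 0)
    (hr : (gr s t E).Reachable v y) : y = v := by
  have := gr_inv (fun a => a = v) (fun e he => by
    have := dg_zero h e he
    simp [this.1, this.2]) hr
  simpa using this

lemma dg_pos_inc {s t : ε → V} {E : Finset ε} {v : V} (h : dg s t E v ≠ 0) :
    ∃ e E0, e ∉ E0 ∧ E = insert e E0 ∧ ∃ x, Inc s t e v x := by
  obtain ⟨e, he, h⟩ := dg_pos h
  refine ⟨e, E.erase e, Finset.notMem_erase _ _, (Finset.insert_erase he).symm, ?_⟩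
  rcases h with h | h
  · exact ⟨t e, Or.inl ⟨h, rfl⟩⟩
  · exact ⟨s e, Or.inr ⟨rfl, h⟩⟩

lemma dg_con_self (s t : ε → V) (E : Finset ε) {w x : V} (hwx : w ≠ x) :
    dg (fun f => pim x w (s f)) (fun f => pim x w (t f)) E w = dg s t E w + dg s t E x := by
  unfold dg
  rw [← Finset.sum_add_distrib]
  refine Finset.sum_congr rfl (fun e _ => ?_)
  have key : ∀ a : V, (if pim x w a = w then 1 else 0) =
      (if a = w then 1 else 0) + (if a = x then 1 else 0) := by
    intro a
    unfold pim
    by_cases h1 : a = x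
    · subst h1; simp [Ne.symm hwx]
    · simp [h1]
  simp only [key]; ring

lemma dg_con_x (s t : ε → V) (E : Finset ε) {w x : V} (hwx : w ≠ x) :
    dg (fun f => pim x w (s f)) (fun f => pim x w (t f)) E x = 0 := by
  refine Finset.sum_eq_zero (fun e _ => ?_)
  have key : ∀ a : V, pim x w a ≠ x := by
    intro a; unfold pim; split_ifs with h
    · exact hwx
    · exact h
  simp [key]

lemma dg_con_other (s t : ε → V) (E : Finset ε) {w x v : V} (h1 : v ≠ w) (h2 : v ≠ x) :
    dg (fun f => pim x w (s f)) (fun f => pim x w (t f)) E v = dg s t E v := by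
  refine Finset.sum_congr rfl (fun e _ => ?_)
  have key : ∀ a : V, pim x w a = v ↔ a = v := by
    intro a; unfold pim; split_ifs with h
    · subst h; exact ⟨fun h => (h1 h.symm).elim, fun h => (h2 h.symm).elim⟩
    · rfl
  simp only [key]

/-- contracting an edge at a degree two vertex preserves the other degrees -/
lemma dg_con_two {s t : ε → V} {E : Finset ε} {e : ε} (he : e ∉ E) {w x v : V}
    (hi : Inc s t e w x) (hwx : w ≠ x) (h2 : dg s t (insert e E) x = 2) (hv : v ≠ x) :
    dg (fun f => pim x w (s f)) (fun f => pim x w (t f)) E v = dg s t (insert e E) v := by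
  rw [dg_insert_inc he hi] at h2 ⊢
  simp only [if_true, if_neg hwx] at h2
  by_cases h : v = w
  · subst h
    rw [dg_con_self s t E hwx]; simp [Ne.symm hv]; omega
  · rw [dg_con_other s t E h hv]; simp [Ne.symm h, Ne.symm hv]

variable [Fintype V]

lemma FF_dg_one {s t : ε → V} {E : Finset ε} {v : V} (h : dg s t E v = 1) : FF s t E = 0 := by
  obtain ⟨e, E0, he, rfl, x, hi⟩ := dg_pos_inc (s := s) (t := t) (E := E) (v := v) (by omega)
  rw [dg_insert_inc he hi] at h
  have hx : x ≠ v := by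
    rintro rfl; simp at h; omega
  have h0 : dg s t E0 v = 0 := by simp at h; omega
  exact FF_bridge s t E0 he hi (fun hr => hx (dg_zero_reach h0 hr))

lemma FF_dg_two {s t : ε → V} {E : Finset ε} {e : ε} (he : e ∉ E) {w x : V}
    (hi : Inc s t e w x) (hwx : w ≠ x) (h2 : dg s t (insert e E) x = 2) :
    FF s t (insert e E) = - FF (fun f => pim x w (s f)) (fun f => pim x w (t f)) E := by
  rw [FF_con s t E he hi hwx, FF_dg_one (v := x), zero_sub]
  rw [dg_insert_inc he hi] at h2
  simp [hwx] at h2; omega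

/-- coefficientwise domination of absolute values -/
def Dom (P Q : ℤ[X]) : Prop := ∀ i, |P.coeff i| ≤ Q.coeff i

lemma Dom_zero {Q : ℤ[X]} (h : Nn Q) : Dom 0 Q := fun i => by simpa using h i

lemma Dom.neg {P Q : ℤ[X]} (h : Dom P Q) : Dom (-P) Q := fun i => by simpa using h i

lemma Dom.sub {P Q P' Q' : ℤ[X]} (h : Dom P Q) (h' : Dom P' Q') : Dom (P - P') (Q + Q') :=
  fun i => by
    rw [coeff_sub, coeff_add]
    exact (abs_sub _ _).trans (add_le_add (h i) (h' i))

lemma Dom.mulX {P Q : ℤ[X]} (h : Dom P Q) : Dom (P * X) (Q * X) := fun i => by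
  cases i with
  | zero => simp
  | succ i => simpa using h i

lemma Dom.mono {P Q Q' : ℤ[X]} (h : Dom P Q) (h' : Nn (Q' - Q)) : Dom P Q' := fun i => by
  have := h' i
  rw [coeff_sub] at this
  have := h i
  omega

/-- the inductive state: one special vertex `w` of degree `d`, the vertices of `S` are cubic,
all other vertices are isolated, and everything is connected to `w` -/
structure State (s t : ε → V) (E : Finset ε) (w : V) (S : Finset V) (d : ℕ) : Prop where
  hw : w ∉ S
  hd : dg s t E w = d
  h3 : ∀ v ∈ S, dg s t E v = 3
  h0 : ∀ v, v ≠ w → v ∉ S → dg s t E v = 0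
  hc : ∀ v ∈ S, (gr s t E).Reachable w v

theorem state_bound (k : ℕ) : ∀ (s t : ε → V) (E : Finset ε) (w : V) (S : Finset V) (d : ℕ),
    E.card = k → State s t E w S d → Dom (FF s t E) (RR S.card d) := by
  induction k using Nat.strong_induction_on with
  | _ k ih =>
  intro s t E w S d hk hst
  by_cases hd0 : d = 0
  · have hS : S = ∅ := by
      refine Finset.eq_empty_of_forall_notMem (fun v hv => ?_)
      have := dg_zero_reach (hst.hd.trans hd0) (hst.hc v hv)
      exact hst.hw (this ▸ hv)
    have hE : E = ∅ := by
      refine Finset.eq_empty_of_forall_notMem (fun e he => ?_)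
      have : dg s t E (s e) = 0 := by
        by_cases h : s e = w
        · rw [h, hst.hd, hd0]
        · exact hst.h0 _ h (by simp [hS])
      exact (dg_zero this e he).1 rfl
    subst hS hE hd0
    intro i
    simp [FF, RR, nul, cc_empty]
    rw [coeff_one]; split_ifs <;> simp
  obtain ⟨e, E0, he, rfl, x, hi⟩ := dg_pos_inc (s := s) (t := t) (E := E) (v := w)
    (by rw [hst.hd]; exact hd0)
  rw [Finset.card_insert_of_notMem he] at hk
  have hdeg := fun v => dg_insert_inc he hi v
  by_cases hx : x = w
  · -- loop
    subst hx
    have hloop : s e = t e := by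
      rcases hi with ⟨h1, h2⟩ | ⟨h1, h2⟩ <;> rw [h1, h2]
    have hdw := hdeg x
    rw [hst.hd] at hdw
    simp at hdw
    obtain ⟨d, rfl⟩ : ∃ d', d = d' + 2 := ⟨d - 2, by omega⟩
    have hother : ∀ v, v ≠ x → dg s t E0 v = dg s t (insert e E0) v := by
      intro v hv; rw [hdeg v]; simp [Ne.symm hv]
    have hst' : State s t E0 x S d :=
      { hw := hst.hw
        hd := by omega
        h3 := fun v hv => by
          rw [hother v (fun h => hst.hw (h ▸ hv))]; exact hst.h3 v hv
        h0 := fun v hv hvS => by rw [hother v hv]; exact hst.h0 v hv hvS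
        hc := fun v hv => by rw [← gr_loop E0 hloop]; exact hst.hc v hv }
    have hb := ih E0.card (by omega) s t E0 x S d rfl hst'
    rw [FF_loop s t E0 he hloop]
    refine (hb.sub hb.mulX).mono ?_
    rw [show RR S.card d + RR S.card d * X = (X + 1) * RR S.card d by ring]
    match d, hst' with
    | 0, hst' =>
      have hS : S = ∅ := by
        refine Finset.eq_empty_of_forall_notMem (fun v hv => ?_)
        have := dg_zero_reach hst'.hd (hst'.hc v hv)
        exact hst.hw (this ▸ hv)
      subst hS
      simp [RR, Nn_zero]
    | 1, hst' =>
      rw [RR_one]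
      simpa using RR_nn _ _
    | d + 2, hst' => exact RR_loop _ _
  · -- not a loop
    have hwx : w ≠ x := Ne.symm hx
    by_cases hbr : (gr s t E0).Reachable w x
    swap
    · rw [FF_bridge s t E0 he hi hbr]
      exact Dom_zero (RR_nn _ _)
    have hxS : x ∈ S := by
      by_contra h
      have h1 := hst.h0 x hx h
      rw [hdeg x] at h1
      simp at h1
    obtain ⟨r, hr⟩ : ∃ r, S.card = r + 1 :=
      ⟨S.card - 1, by have := Finset.card_pos.2 ⟨x, hxS⟩; omega⟩
    have hr' : (S.erase x).card = r := by rw [Finset.card_erase_of_mem hxS, hr]; rfl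
    have hdw : dg s t E0 w + 1 = d := by
      have := hdeg w
      rw [hst.hd] at this
      simp [hx] at this; omega
    have hdx : dg s t E0 x = 2 := by
      have := hdeg x
      rw [hst.h3 x hxS] at this
      simp [hwx] at this; omega
    have hdo : ∀ v, v ≠ w → v ≠ x → dg s t E0 v = dg s t (insert e E0) v := by
      intro v h1 h2; rw [hdeg v]; simp [Ne.symm h1, Ne.symm h2]
    have hSw : ∀ v ∈ S, v ≠ w := fun v hv h => hst.hw (h ▸ hv)
    match d, hst, hdw with
    | 1, hst, hdw => exact absurd (dg_zero_reach (by omega) hbr) hx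
    | 2, hst, hdw =>
      rw [FF_dg_two he hi.symm hx hst.hd, hr, RR_two, ← hr']
      refine (ih E0.card (by omega) _ _ E0 x (S.erase x) 3 rfl ?_).neg
      exact
      { hw := Finset.notMem_erase _ _
        hd := by rw [dg_con_two he hi.symm hx hst.hd hx]; exact hst.h3 x hxS
        h3 := fun v hv => by
          have hv := Finset.mem_of_mem_erase hv
          rw [dg_con_two he hi.symm hx hst.hd (hSw v hv)]; exact hst.h3 v hv
        h0 := fun v hv hvS => by
          by_cases hvw : v = w
          · subst hvw; exact dg_con_x s t E0 hx
          · rw [dg_con_two he hi.symm hx hst.hd hvw]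
            exact hst.h0 v hvw (fun h => hvS (Finset.mem_erase.2 ⟨hv, h⟩))
        hc := fun v hv => by
          have hv := Finset.mem_of_mem_erase hv
          have := gr_con hi.symm (((hst.hc x hxS).symm).trans (hst.hc v hv))
          simpa [pim, hx, hSw v hv] using this }
    | d + 3, hst, hdw =>
      rw [FF_con s t E0 he hi hwx, hr, RR_big]
      refine Dom.sub ?_ ?_
      · -- deletion, then suppress `x`
        obtain ⟨g, E1, hg, rfl, y, hj⟩ := dg_pos_inc (s := s) (t := t) (E := E0) (v := x) (by omega)
        have hyx : y ≠ x := by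
          rintro rfl
          have h1 := dg_insert_inc hg hj y
          rw [hdx] at h1
          simp at h1
          have hl : s g = t g := by
            rcases hj with ⟨h1, h2⟩ | ⟨h1, h2⟩ <;> rw [h1, h2]
          rw [gr_loop E1 hl] at hbr
          exact hwx (dg_zero_reach (by omega) hbr.symm)
        rw [Finset.card_insert_of_notMem hg] at hk
        rw [FF_dg_two hg hj.symm hyx hdx, ← hr']
        refine (ih E1.card (by omega) _ _ E1 w (S.erase x) (d + 2) rfl ?_).neg
        exact
        { hw := fun h => hst.hw (Finset.mem_of_mem_erase h)
          hd := by rw [dg_con_two hg hj.symm hyx hdx hwx]; omega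
          h3 := fun v hv => by
            obtain ⟨hvx, hv⟩ := Finset.mem_erase.1 hv
            rw [dg_con_two hg hj.symm hyx hdx hvx, hdo v (hSw v hv) hvx]; exact hst.h3 v hv
          h0 := fun v hv hvS => by
            by_cases hvx : v = x
            · subst hvx; exact dg_con_x s t E1 hyx
            · rw [dg_con_two hg hj.symm hyx hdx hvx, hdo v hv hvx]
              exact hst.h0 v hv (fun h => hvS (Finset.mem_erase.2 ⟨hvx, h⟩))
          hc := fun v hv => by
            obtain ⟨hvx, hv⟩ := Finset.mem_erase.1 hv
            have := gr_con hj.symm (gr_del hi hbr (hst.hc v hv))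
            simpa [pim, hwx, hvx] using this }
      · rw [← hr']
        refine ih E0.card (by omega) _ _ E0 w (S.erase x) (d + 4) rfl ?_
        exact
        { hw := fun h => hst.hw (Finset.mem_of_mem_erase h)
          hd := by rw [dg_con_self s t E0 hwx]; omega
          h3 := fun v hv => by
            obtain ⟨hvx, hv⟩ := Finset.mem_erase.1 hv
            rw [dg_con_other s t E0 (hSw v hv) hvx, hdo v (hSw v hv) hvx]; exact hst.h3 v hv
          h0 := fun v hv hvS => by
            by_cases hvx : v = x
            · subst hvx; exact dg_con_x s t E0 hwx
            · rw [dg_con_other s t E0 hv hvx, hdo v hv hvx]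
              exact hst.h0 v hv (fun h => hvS (Finset.mem_erase.2 ⟨hvx, h⟩))
          hc := fun v hv => by
            obtain ⟨hvx, hv⟩ := Finset.mem_erase.1 hv
            have := gr_con hi (hst.hc v hv)
            simpa [pim, hwx, hvx] using this }

end MainAux

section FinalAux

set_option linter.unusedSectionVars false

variable {V : Type} [Fintype V] [DecidableEq V]

/-- first chosen end of an edge -/
noncomputable def es (e : Sym2 V) : V := (Quot.out e).1
/-- second chosen end of an edge -/
noncomputable def et (e : Sym2 V) : V := (Quot.out e).2

lemma es_et (e : Sym2 V) : s(es e, et e) = e := Quot.out_eq e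

lemma gr_es (Z : Finset (Sym2 V)) :
    gr es et Z = SimpleGraph.fromEdgeSet (Z : Set (Sym2 V)) := by
  simp [gr, es_et]

lemma flow_FF (G : SimpleGraph V) :
    flowPoly G = (-1) ^ G.edgeSet.toFinite.toFinset.card *
      FF es et G.edgeSet.toFinite.toFinset := by
  unfold flowPoly FF
  rw [Finset.mul_sum]
  refine Finset.sum_congr rfl (fun Z hZ => ?_)
  have hc := Finset.card_le_card (Finset.mem_powerset.1 hZ)
  rw [nul, cc, gr_es, ← mul_assoc, ← pow_add]
  obtain ⟨k, hk⟩ := Nat.exists_eq_add_of_le hc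
  rw [hk, show Z.card + k - Z.card = k by omega,
    show Z.card + k + Z.card = k + 2 * Z.card by ring, pow_add, pow_mul]
  simp [zsmul_eq_mul]

lemma tau_coeff (G : SimpleGraph V) (i : ℕ) :
    |(tauPoly G).coeff i| = |(FF es et G.edgeSet.toFinite.toFinset).coeff i| := by
  have key : ∀ (k : ℕ) (P : ℤ[X]), |((-1 : ℤ[X]) ^ k * P).coeff i| = |P.coeff i| := by
    intro k P
    rcases neg_one_pow_eq_or ℤ[X] k with h | h <;> simp [h]
  rw [tauPoly, key, show (-X : ℤ[X]) = C (-1) * X by simp, comp_C_mul_X_coeff, flow_FF, abs_mul, key]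
  simp

lemma dg_es (G : SimpleGraph V) (v : V) :
    dg es et G.edgeSet.toFinite.toFinset v = Nat.card (G.neighborSet v) := by
  classical
  have h1 : G.edgeSet.toFinite.toFinset = G.edgeFinset := by
    ext e; simp
  rw [h1, Nat.card_eq_fintype_card, SimpleGraph.card_neighborSet_eq_degree,
    ← SimpleGraph.card_incidenceFinset_eq_degree, SimpleGraph.incidenceFinset_eq_filter,
    Finset.card_filter, dg]
  refine Finset.sum_congr rfl (fun e he => ?_)
  have hadj : G.Adj (es e) (et e) := by
    rw [← SimpleGraph.mem_edgeSet, es_et]; simpa using he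
  have hne := hadj.ne
  have hm : v ∈ e ↔ v = es e ∨ v = et e := by
    conv_lhs => rw [← es_et e]
    simp
  simp only [hm]
  by_cases ha : es e = v
  · subst ha; simp [Ne.symm hne]
  · by_cases hb : et e = v
    · subst hb; simp [ha]
    · simp [ha, hb, Ne.symm ha, Ne.symm hb]

lemma cc_conn {Z : Finset (Sym2 V)} (h : (gr es et Z).Connected) : cc es et Z = 1 := by
  have := h.nonempty
  have := h.preconnected.subsingleton_connectedComponent
  obtain ⟨v⟩ := h.nonempty
  exact Nat.card_eq_one_iff_unique.2 ⟨this, ⟨(gr es et Z).connectedComponentMk v⟩⟩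

lemma top_coeff (G : SimpleGraph V) (hconn : G.Connected)
    (hb : ∀ e : Sym2 V, ¬ G.IsBridge e) (i : ℕ)
    (hi : G.edgeSet.toFinite.toFinset.card + 1 - Fintype.card V ≤ i) 
    (hm : Fintype.card V ≤ G.edgeSet.toFinite.toFinset.card) :
    |(FF es et G.edgeSet.toFinite.toFinset).coeff i| =
      if i = G.edgeSet.toFinite.toFinset.card + 1 - Fintype.card V then 1 else 0 := by
  set E := G.edgeSet.toFinite.toFinset with hE
  have hcE : nul es et E = E.card + 1 - Fintype.card V := by
    rw [nul, cc_conn]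
    rw [gr_es, hE]; simpa using hconn
  have hterm : ∀ Z : Finset (Sym2 V), ((-1) ^ Z.card * X ^ nul es et Z : ℤ[X]).coeff i =
      if i = nul es et Z then (-1) ^ Z.card else 0 := by
    intro Z
    rw [show ((-1 : ℤ[X]) ^ Z.card) = C ((-1) ^ Z.card) by simp, coeff_C_mul_X_pow]
  rw [FF, finsetSum_coeff, Finset.sum_eq_single E]
  · rw [hterm, hcE]
    split_ifs <;> simp
  · intro Z hZ hne
    rw [hterm, if_neg]
    have hZ := Finset.mem_powerset.1 hZ
    obtain ⟨e, heE, heZ⟩ := Finset.exists_of_ssubset (hZ.ssubset_of_ne hne)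
    have hle := nul_mono es et (Finset.subset_erase.2 ⟨hZ, heZ⟩)
    have : nul es et (E.erase e) = E.card - 1 + 1 - Fintype.card V := by
      rw [nul, cc_conn, Finset.card_erase_of_mem heE]
      have hbe := hb e
      have h2 : gr es et (E.erase e) = G.deleteEdges {e} := by
        rw [gr_es]; ext a b
        simp [hE, SimpleGraph.deleteEdges_adj]
        intro hab
        exact ⟨fun h h1 => hab.ne (h h1), fun h h1 => absurd h1 h⟩
      rw [h2]
      induction e using Sym2.ind with | _ a b
      exact hconn.connected_delete_edge_of_not_isBridge hbe
    have : 0 < E.card := Finset.card_pos.2 ⟨e, heE⟩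
    omega
  · intro h; exact absurd (Finset.mem_powerset_self E) h

end FinalAux

/-- For a connected bridgeless simple cubic graph, `τ(G,t)` has degree `n/2 + 1` and
its coefficients are bounded by those of the indicated products. -/
theorem stmt_2 {V : Type} [Fintype V] (G : SimpleGraph V)
    (hconn : G.Connected) (hbridgeless : ∀ e : Sym2 V, ¬ G.IsBridge e)
    (hcubic : ∀ v : V, Nat.card (G.neighborSet v) = 3)
    (n : ℕ) (hn : n = Fintype.card V)
    (U : Polynomial ℤ)
    (hU : U = if n = 4 then (X + 1) * (X + 2) * (X + 3)
          else if n = 6 then (X + 1) * (X + 2) * (X + 3) * (X + 4)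
          else (X + 1) * (X + 2) * (X + 3) ^ 2 * (X + 4) ^ ((n - 6) / 2)) :
    (tauPoly G).natDegree = n / 2 + 1 ∧ ∀ i : ℕ, (tauPoly G).coeff i ≤ U.coeff i := by
  classical
  obtain ⟨w⟩ := hconn.nonempty
  have hdeg : ∀ v, G.degree v = 3 := by
    intro v
    rw [← SimpleGraph.card_neighborSet_eq_degree, ← Nat.card_eq_fintype_card]; exact hcubic v
  have hE : G.edgeSet.toFinite.toFinset.card = G.edgeFinset.card := by
    congr 1; ext e; simp
  have hsum := G.sum_degrees_eq_twice_card_edges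
  simp only [hdeg, Finset.sum_const, Finset.card_univ, smul_eq_mul, ← hn, ← hE] at hsum
  have hn4 : 4 ≤ n := by
    have := G.degree_lt_card_verts w
    rw [hdeg] at this; omega
  have heven : Even n := by
    rw [Nat.even_iff]; omega
  constructor
  · have htop := fun i hi => top_coeff G hconn hbridgeless i hi (by omega)
    have hN : G.edgeSet.toFinite.toFinset.card + 1 - Fintype.card V = n / 2 + 1 := by
      rw [Nat.even_iff] at heven; omega
    rw [hN] at htop
    apply natDegree_eq_of_le_of_coeff_ne_zero
    · rw [natDegree_le_iff_coeff_eq_zero]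
      intro i hi
      have := htop i (by omega)
      rw [← tau_coeff, if_neg (by omega)] at this
      exact abs_eq_zero.1 this
    · have := htop (n / 2 + 1) le_rfl
      rw [← tau_coeff, if_pos rfl] at this
      intro h
      rw [h] at this; simp at this
  · have hst : State es et G.edgeSet.toFinite.toFinset w (Finset.univ.erase w) 3 :=
      { hw := Finset.notMem_erase _ _
        hd := by rw [dg_es]; exact hcubic w
        h3 := fun v _ => by rw [dg_es]; exact hcubic v
        h0 := fun v hv h => absurd (Finset.mem_erase.2 ⟨hv, Finset.mem_univ v⟩) h
        hc := fun v _ => by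
          rw [gr_es]
          simpa using hconn.preconnected w v }
    have hb := state_bound _ _ _ _ _ _ _ rfl hst
    rw [Finset.card_erase_of_mem (Finset.mem_univ w), Finset.card_univ, ← hn] at hb
    have hb := hb.mono (RR_final n heven hn4)
    rw [← hU] at hb
    intro i
    have := hb i
    rw [← tau_coeff] at this
    exact (le_abs_self _).trans this
end

section
/- Let G be a connected bridgeless finite simple cubic graph with n vertices and m edges whose flow polynomial F(G,t) has only real roots, and write F(G,t) = Σ_{i=0}^{m−n+1} c_i t^i. Then for every i with 0 ≤ i ≤ m−n+1 one has b_i ≤ |c_i|, where the b_i are defined by Σ_{i=0}^{m−n+1} b_i t^i = (t+1)(t+2)^{n/2}. -/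
open Polynomial

namespace FlowAux

open Finset Classical

set_option linter.unusedSectionVars false

variable {V ι : Type}

def R (s t : ι → V) (Z : Finset ι) (x y : V) : Prop := ∃ i ∈ Z, s i = x ∧ t i = y

noncomputable def cc (s t : ι → V) (Z : Finset ι) : ℕ := Nat.card (Quot (R s t Z))

def conn (s t : ι → V) (Z : Finset ι) (x y : V) : Prop :=
  Quot.mk (R s t Z) x = Quot.mk (R s t Z) y

lemma conn_of_mem {s t : ι → V} {Z : Finset ι} {i : ι} (hi : i ∈ Z) :
    conn s t Z (s i) (t i) := Quot.sound ⟨i, hi, rfl, rfl⟩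

lemma conn_invariant {s t : ι → V} {Z : Finset ι} {β : Type*} (f : V → β)
    (hf : ∀ i ∈ Z, f (s i) = f (t i)) {x y : V} (h : conn s t Z x y) : f x = f y := by
  have := congrArg (Quot.lift f (by rintro a b ⟨i, hi, rfl, rfl⟩; exact hf i hi)) h
  exact this

lemma conn_mono {s t : ι → V} {Z W : Finset ι} (hZW : Z ⊆ W) {x y : V}
    (h : conn s t Z x y) : conn s t W x y :=
  conn_invariant (fun a => Quot.mk (R s t W) a) (fun _ hi => conn_of_mem (hZW hi)) h

lemma cc_insert_conn (s t : ι → V) (Z : Finset ι) (e : ι)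
    (h : conn s t Z (s e) (t e)) : cc s t (insert e Z) = cc s t Z := by
  apply Nat.card_congr
  refine ⟨Quot.lift (fun x => Quot.mk _ x) ?_, Quot.lift (fun x => Quot.mk _ x) ?_, ?_, ?_⟩
  · rintro a b ⟨i, hi, rfl, rfl⟩
    rcases Finset.mem_insert.1 hi with rfl | hi
    · exact h
    · exact conn_of_mem hi
  · rintro a b ⟨i, hi, rfl, rfl⟩
    exact conn_of_mem (Finset.mem_insert_of_mem hi)
  · rintro ⟨x⟩; rfl
  · rintro ⟨x⟩; rfl

lemma cc_insert_not_conn [Finite V] (s t : ι → V) (Z : Finset ι) (e : ι)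
    (h : ¬ conn s t Z (s e) (t e)) : cc s t Z = cc s t (insert e Z) + 1 := by
  let g : Quot (R s t Z) → Quot (R s t Z) := fun q =>
    if q = Quot.mk _ (t e) then Quot.mk _ (s e) else q
  have key : Quot (R s t Z) ≃ Option (Quot (R s t (insert e Z))) := by
    refine ⟨fun q => if q = Quot.mk _ (t e) then none else
        some (Quot.lift (fun x => Quot.mk _ x) ?_ q),
      fun o => o.elim (Quot.mk _ (t e)) (Quot.lift
        (fun x => g (Quot.mk _ x)) ?_), ?_, ?_⟩
    · rintro a b ⟨i, hi, rfl, rfl⟩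
      exact conn_of_mem (Finset.mem_insert_of_mem hi)
    · rintro a b ⟨i, hi, rfl, rfl⟩
      rcases Finset.mem_insert.1 hi with rfl | hi
      · simp [g]
      · have h1 : Quot.mk (R s t Z) (s i) = Quot.mk _ (t i) := conn_of_mem hi
        simp only [h1]
    · rintro ⟨x⟩
      by_cases hx : Quot.mk (R s t Z) x = Quot.mk _ (t e)
      · simp [hx]
      · simp [hx, g]
    · rintro (_ | ⟨⟨x⟩⟩)
      · simp
      · by_cases hx : conn s t Z x (t e)
        · have h2 : conn s t (insert e Z) (s e) x :=
            (conn_of_mem (Finset.mem_insert_self e Z)).trans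
              (conn_mono (Finset.subset_insert e Z) hx).symm
          have h3 : ¬ Quot.mk (R s t Z) (s e) = Quot.mk (R s t Z) (t e) := h
          have h4 : g (Quot.mk _ x) = Quot.mk _ (s e) := if_pos hx
          simp only [Option.elim, h4, h3, if_false]
          exact congrArg some h2
        · have h3 : ¬ Quot.mk (R s t Z) x = Quot.mk (R s t Z) (t e) := hx
          have h4 : g (Quot.mk _ x) = Quot.mk _ x := if_neg hx
          simp only [Option.elim, h4, if_false, h3]
  unfold cc
  rw [Nat.card_congr key, Finite.card_option]

/-- merging `v` into `u` -/
noncomputable def mg (u v : V) (x : V) : V := if x = v then u else x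

lemma cc_contract [Finite V] (s t : ι → V) (Z : Finset ι) (e : ι) (u v : V) (huv : u ≠ v)
    (he : (s e = u ∧ t e = v) ∨ (s e = v ∧ t e = u)) :
    cc (mg u v ∘ s) (mg u v ∘ t) Z = cc s t (insert e Z) + 1 := by
  have hne : ∀ x, mg u v x ≠ v := by
    intro x; unfold mg; split_ifs <;> assumption
  have huvc : conn s t (insert e Z) u v := by
    have := conn_of_mem (s := s) (t := t) (Finset.mem_insert_self e Z)
    rcases he with ⟨h1, h2⟩ | ⟨h1, h2⟩
    · rwa [h1, h2] at this
    · rw [h1, h2] at this; exact this.symm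
  have hc : ∀ x, conn s t (insert e Z) (mg u v x) x := by
    intro x; unfold mg; split_ifs with h
    · rw [h]; exact huvc
    · rfl
  have key : Quot (R (mg u v ∘ s) (mg u v ∘ t) Z) ≃ Option (Quot (R s t (insert e Z))) := by
    refine ⟨Quot.lift (fun x => if x = v then none else some (Quot.mk _ x)) ?_,
      fun o => o.elim (Quot.mk _ v) (Quot.lift (fun x => Quot.mk _ (mg u v x)) ?_), ?_, ?_⟩
    · rintro a b ⟨i, hi, rfl, rfl⟩
      simp only [Function.comp, hne, if_false]
      exact congrArg some (((hc _).trans (conn_of_mem (Finset.mem_insert_of_mem hi))).trans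
        (hc _).symm)
    · rintro a b ⟨i, hi, rfl, rfl⟩
      rcases Finset.mem_insert.1 hi with rfl | hi
      · rcases he with ⟨h1, h2⟩ | ⟨h1, h2⟩ <;> simp [h1, h2, mg]
      · exact conn_of_mem (s := mg u v ∘ s) (t := mg u v ∘ t) hi
    · rintro ⟨x⟩
      by_cases hx : x = v
      · simp [hx]
      · simp [hx, mg]
    · rintro (_ | ⟨⟨x⟩⟩)
      · simp
      · simp only [Option.elim, hne, if_false]
        exact congrArg some (hc x)
  unfold cc
  rw [Nat.card_congr key, Finite.card_option]

variable [Fintype V]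

lemma cc_empty (s t : ι → V) : cc s t ∅ = Fintype.card V := by
  unfold cc
  rw [← Nat.card_eq_fintype_card]
  apply Nat.card_congr
  refine ⟨Quot.lift id ?_, Quot.mk _, ?_, ?_⟩
  · rintro a b ⟨i, hi, -⟩; simp at hi
  · rintro ⟨x⟩; rfl
  · intro x; rfl

lemma card_le (s t : ι → V) (Z : Finset ι) : Fintype.card V ≤ Z.card + cc s t Z := by
  induction Z using Finset.induction_on with
  | empty => simp [cc_empty]
  | insert e Z he ih =>
    rw [Finset.card_insert_of_notMem he]
    by_cases h : conn s t Z (s e) (t e)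
    · rw [cc_insert_conn s t Z e h]; omega
    · have := cc_insert_not_conn s t Z e h; omega

noncomputable def nul (s t : ι → V) (Z : Finset ι) : ℕ := Z.card + cc s t Z - Fintype.card V

lemma nul_insert_conn {s t : ι → V} {Z : Finset ι} {e : ι} (he : e ∉ Z)
    (h : conn s t Z (s e) (t e)) : nul s t (insert e Z) = nul s t Z + 1 := by
  have := card_le s t Z
  unfold nul
  rw [Finset.card_insert_of_notMem he, cc_insert_conn s t Z e h]; omega

lemma nul_insert_not_conn {s t : ι → V} {Z : Finset ι} {e : ι} (he : e ∉ Z)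
    (h : ¬ conn s t Z (s e) (t e)) : nul s t (insert e Z) = nul s t Z := by
  have := cc_insert_not_conn s t Z e h
  unfold nul
  rw [Finset.card_insert_of_notMem he]; omega

lemma nul_contract {s t : ι → V} {Z : Finset ι} {e : ι} (hZ : e ∉ Z) {u v : V} (huv : u ≠ v)
    (he : (s e = u ∧ t e = v) ∨ (s e = v ∧ t e = u)) :
    nul (mg u v ∘ s) (mg u v ∘ t) Z = nul s t (insert e Z) := by
  have := cc_contract s t Z e u v huv he
  unfold nul
  rw [Finset.card_insert_of_notMem hZ]; omega

lemma nul_mono {s t : ι → V} {Z W : Finset ι} (h : Z ⊆ W) : nul s t Z ≤ nul s t W := by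
  induction W using Finset.induction_on generalizing Z with
  | empty => rw [Finset.subset_empty.1 h]
  | insert e W he ih =>
    have h1 : ∀ Y : Finset ι, e ∉ Y → nul s t Y ≤ nul s t (insert e Y) := by
      intro Y hY
      by_cases hc : conn s t Y (s e) (t e)
      · rw [nul_insert_conn hY hc]; omega
      · rw [nul_insert_not_conn hY hc]
    by_cases heZ : e ∈ Z
    · have h2 : Z.erase e ⊆ W := by
        intro x hx
        have := h (Finset.mem_of_mem_erase hx)
        exact Finset.mem_of_mem_insert_of_ne this (Finset.ne_of_mem_erase hx)
      have h3 := ih h2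
      rw [← Finset.insert_erase heZ]
      by_cases hc : conn s t (Z.erase e) (s e) (t e)
      · rw [nul_insert_conn (by simp) hc, nul_insert_conn he (conn_mono h2 hc)]; omega
      · rw [nul_insert_not_conn (by simp) hc]; exact h3.trans (h1 W he)
    · have h2 : Z ⊆ W := fun x hx =>
        Finset.mem_of_mem_insert_of_ne (h hx) (by rintro rfl; exact heZ hx)
      exact (ih h2).trans (h1 W he)

/-- The flow polynomial evaluated. -/
noncomputable def F (s t : ι → V) (E : Finset ι) (x : ℝ) : ℝ :=
  ∑ Z ∈ E.powerset, (-1 : ℝ) ^ (E.card + Z.card) * x ^ nul s t Z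

lemma F_insert (s t : ι → V) (E : Finset ι) (e : ι) (he : e ∉ E) (x : ℝ) :
    F s t (insert e E) x =
      ∑ Z ∈ E.powerset, (-1 : ℝ) ^ (E.card + Z.card) * x ^ nul s t (insert e Z) - F s t E x := by
  unfold F
  rw [Finset.sum_powerset_insert he, sub_eq_neg_add, ← Finset.sum_neg_distrib]
  congr 1
  · apply Finset.sum_congr rfl
    intro Z hZ
    rw [Finset.card_insert_of_notMem he]; ring
  · apply Finset.sum_congr rfl
    intro Z hZ
    have : e ∉ Z := fun h => he (Finset.mem_powerset.1 hZ h)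
    rw [Finset.card_insert_of_notMem he, Finset.card_insert_of_notMem this]; ring

lemma F_contract (s t : ι → V) (E : Finset ι) (e : ι) (he : e ∉ E) (x : ℝ) {u v : V}
    (huv : u ≠ v) (hh : (s e = u ∧ t e = v) ∨ (s e = v ∧ t e = u)) :
    F s t (insert e E) x = F (mg u v ∘ s) (mg u v ∘ t) E x - F s t E x := by
  rw [F_insert s t E e he]
  congr 1
  apply Finset.sum_congr rfl
  intro Z hZ
  rw [nul_contract (fun h => he (Finset.mem_powerset.1 hZ h)) huv hh]

lemma F_loop (s t : ι → V) (E : Finset ι) (e : ι) (he : e ∉ E) (x : ℝ) (hh : s e = t e) :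
    F s t (insert e E) x = (x - 1) * F s t E x := by
  rw [F_insert s t E e he, sub_mul, one_mul]
  congr 1
  unfold F
  rw [Finset.mul_sum]
  apply Finset.sum_congr rfl
  intro Z hZ
  rw [nul_insert_conn (fun h => he (Finset.mem_powerset.1 hZ h)) (by rw [hh]; rfl)]
  ring

lemma F_bridge (s t : ι → V) (E : Finset ι) (e : ι) (he : e ∉ E) (x : ℝ)
    (hh : ¬ conn s t E (s e) (t e)) : F s t (insert e E) x = 0 := by
  rw [F_insert s t E e he, sub_eq_zero]
  apply Finset.sum_congr rfl
  intro Z hZ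
  have hZ' := Finset.mem_powerset.1 hZ
  rw [nul_insert_not_conn (fun h => he (hZ' h)) (fun h => hh (conn_mono hZ' h))]

/-- edge cut -/
noncomputable def dl (s t : ι → V) (E : Finset ι) (A : Finset V) : Finset ι :=
  E.filter (fun i => ¬ (s i ∈ A ↔ t i ∈ A))

def BL (s t : ι → V) (E : Finset ι) : Prop := ∀ A : Finset V, (dl s t E A).card ≠ 1

lemma F_not_BL {s t : ι → V} {E : Finset ι} (h : ¬ BL s t E) (x : ℝ) : F s t E x = 0 := by
  unfold BL at h
  push Not at h
  obtain ⟨A, hA⟩ := h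
  obtain ⟨e, he⟩ := Finset.card_eq_one.1 hA
  have h1 : e ∈ dl s t E A := by rw [he]; simp
  have h2 := Finset.mem_filter.1 h1
  rw [← Finset.insert_erase h2.1]
  apply F_bridge _ _ _ _ (by simp)
  intro hc
  apply h2.2
  have := conn_invariant (fun a => a ∈ A) (by
    intro i hi
    by_contra hcon
    have : i ∈ dl s t E A :=
      Finset.mem_filter.2 ⟨Finset.mem_of_mem_erase hi, fun h => hcon (propext h)⟩
    rw [he, Finset.mem_singleton] at this
    exact Finset.ne_of_mem_erase hi this) hc
  exact this.to_iff

lemma BL_conn {s t : ι → V} {E : Finset ι} {e : ι} (he : e ∉ E) (h : BL s t (insert e E)) :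
    conn s t E (s e) (t e) := by
  by_contra hc
  apply h (Finset.univ.filter (fun x => conn s t E (s e) x))
  rw [Finset.card_eq_one]
  refine ⟨e, ?_⟩
  ext i
  simp only [dl, Finset.mem_filter, Finset.mem_univ, true_and, Finset.mem_singleton,
    Finset.mem_insert]
  constructor
  · rintro ⟨rfl | hi, h2⟩
    · rfl
    · exfalso; apply h2
      have := conn_of_mem (s := s) (t := t) hi
      exact ⟨fun h => h.trans this, fun h => h.trans this.symm⟩
  · rintro rfl
    refine ⟨Or.inl rfl, fun h => hc (h.1 rfl)⟩

lemma nul_lt {s t : ι → V} {E Z : Finset ι} (h : BL s t E) (hZ : Z ⊂ E) :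
    nul s t Z < nul s t E := by
  obtain ⟨e, he, heZ⟩ := Finset.exists_of_ssubset hZ
  have h1 : nul s t Z ≤ nul s t (E.erase e) :=
    nul_mono (Finset.subset_erase.2 ⟨hZ.1, heZ⟩)
  have hn := Finset.notMem_erase e E
  rw [← Finset.insert_erase he] at h
  have h2 := nul_insert_conn hn (BL_conn hn h)
  rw [Finset.insert_erase he] at h2
  omega

lemma BL_contract {s t : ι → V} {E : Finset ι} {e : ι} (he : e ∉ E) {u v : V}
    (hh : (s e = u ∧ t e = v) ∨ (s e = v ∧ t e = u))
    (h : BL s t (insert e E)) : BL (mg u v ∘ s) (mg u v ∘ t) E := by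
  intro A hA
  apply h (Finset.univ.filter (fun x => mg u v x ∈ A))
  rw [← hA]
  congr 1
  ext i
  simp only [dl, Finset.mem_filter, Finset.mem_univ, true_and, Finset.mem_insert, Function.comp]
  constructor
  · rintro ⟨rfl | hi, h2⟩
    · exfalso; apply h2
      rcases hh with ⟨h1, h2⟩ | ⟨h1, h2⟩ <;> simp [h1, h2, mg]
    · exact ⟨hi, h2⟩
  · rintro ⟨hi, h2⟩; exact ⟨Or.inr hi, h2⟩

lemma BL_loop {s t : ι → V} {E : Finset ι} {e : ι} (hh : s e = t e)
    (h : BL s t (insert e E)) : BL s t E := by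
  intro A hA
  apply h A
  rw [← hA]
  congr 1
  ext i
  simp only [dl, Finset.mem_filter, Finset.mem_insert]
  constructor
  · rintro ⟨rfl | hi, h2⟩
    · exact absurd (by rw [hh]) h2
    · exact ⟨hi, h2⟩
  · rintro ⟨hi, h2⟩; exact ⟨Or.inr hi, h2⟩

noncomputable def deg (s t : ι → V) (E : Finset ι) (x : V) : ℕ :=
  ∑ i ∈ E, ((if s i = x then 1 else 0) + (if t i = x then 1 else 0))

noncomputable def odds (s t : ι → V) (E : Finset ι) : Finset V :=
  Finset.univ.filter (fun x => Odd (deg s t E x))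

lemma deg_insert (s t : ι → V) (E : Finset ι) (e : ι) (he : e ∉ E) (x : V) :
    deg s t (insert e E) x =
      ((if s e = x then 1 else 0) + (if t e = x then 1 else 0)) + deg s t E x := by
  unfold deg; rw [Finset.sum_insert he]

lemma deg_mg_ne (s t : ι → V) (E : Finset ι) {u v x : V} (hu : x ≠ u) (hv : x ≠ v) :
    deg (mg u v ∘ s) (mg u v ∘ t) E x = deg s t E x := by
  unfold deg
  apply Finset.sum_congr rfl
  intro i _
  have : ∀ y, mg u v y = x ↔ y = x := by
    intro y; unfold mg; split_ifs with h
    · subst h; exact ⟨fun h => absurd h.symm hu, fun h => absurd h.symm hv⟩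
    · rfl
  simp only [Function.comp, this]

lemma deg_mg_u (s t : ι → V) (E : Finset ι) {u v : V} (huv : u ≠ v) :
    deg (mg u v ∘ s) (mg u v ∘ t) E u = deg s t E u + deg s t E v := by
  unfold deg
  rw [← Finset.sum_add_distrib]
  apply Finset.sum_congr rfl
  intro i _
  have : ∀ y, (if mg u v y = u then 1 else 0 : ℕ)
      = (if y = u then 1 else 0) + (if y = v then 1 else 0) := by
    intro y; unfold mg
    by_cases h : y = v
    · subst h; simp [huv.symm]
    · simp [h]
  simp only [Function.comp, this]; ring

/-- contraction with `v` even keeps odd vertices -/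
lemma odds_contract_even {s t : ι → V} {E : Finset ι} {e : ι} (he : e ∉ E) {u v : V} (huv : u ≠ v)
    (hh : (s e = u ∧ t e = v) ∨ (s e = v ∧ t e = u)) (hv : ¬ Odd (deg s t (insert e E) v)) :
    odds s t (insert e E) ⊆ odds (mg u v ∘ s) (mg u v ∘ t) E := by
  intro x hx
  simp only [odds, Finset.mem_filter, Finset.mem_univ, true_and] at hx ⊢
  by_cases hxv : x = v
  · subst hxv; exact absurd hx hv
  rw [deg_insert _ _ _ _ he] at hx hv
  by_cases hxu : x = u
  · subst hxu
    rw [deg_mg_u _ _ _ huv]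
    rcases hh with ⟨h1, h2⟩ | ⟨h1, h2⟩ <;>
      · simp only [h1, h2, if_true, huv, huv.symm, if_false] at hx hv
        simp only [Nat.odd_iff] at *; omega
  · rw [deg_mg_ne _ _ _ hxu hxv]
    rcases hh with ⟨h1, h2⟩ | ⟨h1, h2⟩ <;> simpa [h1, h2, Ne.symm hxu, Ne.symm hxv] using hx

lemma odds_contract {s t : ι → V} {E : Finset ι} {e : ι} (he : e ∉ E) {u v : V} 
    (hh : (s e = u ∧ t e = v) ∨ (s e = v ∧ t e = u)) :
    (odds s t (insert e E)).card ≤ (odds (mg u v ∘ s) (mg u v ∘ t) E).card + 2 := by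
  have : odds s t (insert e E) ⊆ odds (mg u v ∘ s) (mg u v ∘ t) E ∪ {u, v} := by
    intro x hx
    by_cases hxv : x = v
    · simp [hxv]
    by_cases hxu : x = u
    · simp [hxu]
    apply Finset.mem_union_left
    simp only [odds, Finset.mem_filter, Finset.mem_univ, true_and] at hx ⊢
    rw [deg_insert _ _ _ _ he] at hx
    rw [deg_mg_ne _ _ _ hxu hxv]
    rcases hh with ⟨h1, h2⟩ | ⟨h1, h2⟩ <;> simpa [h1, h2, Ne.symm hxu, Ne.symm hxv] using hx
  exact (Finset.card_le_card this).trans ((Finset.card_union_le _ _).trans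
    (Nat.add_le_add_left Finset.card_le_two _))

lemma odds_delete {s t : ι → V} {E : Finset ι} {e : ι} (he : e ∉ E) :
    (odds s t (insert e E)).card ≤ (odds s t E).card + 2 := by
  have : odds s t (insert e E) ⊆ odds s t E ∪ {s e, t e} := by
    intro x hx
    by_cases hxv : x = s e
    · simp [hxv]
    by_cases hxu : x = t e
    · simp [hxu]
    apply Finset.mem_union_left
    simp only [odds, Finset.mem_filter, Finset.mem_univ, true_and] at hx ⊢
    rw [deg_insert _ _ _ _ he] at hx
    simpa [Ne.symm hxu, Ne.symm hxv] using hx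
  exact (Finset.card_le_card this).trans ((Finset.card_union_le _ _).trans
    (Nat.add_le_add_left Finset.card_le_two _))

lemma odds_loop {s t : ι → V} {E : Finset ι} {e : ι} (he : e ∉ E) (hh : s e = t e) :
    odds s t (insert e E) = odds s t E := by
  ext x
  simp only [odds, Finset.mem_filter, Finset.mem_univ, true_and]
  rw [deg_insert _ _ _ _ he, hh]
  split_ifs <;> simp only [Nat.odd_iff] <;> omega

lemma dl_submod (s t : ι → V) (E : Finset ι) (A B : Finset V) :
    (dl s t E (A ∩ B)).card + (dl s t E (A ∪ B)).card ≤
      (dl s t E A).card + (dl s t E B).card := by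
  simp only [dl, Finset.card_filter]
  rw [← Finset.sum_add_distrib, ← Finset.sum_add_distrib]
  apply Finset.sum_le_sum
  intro i _
  simp only [Finset.mem_inter, Finset.mem_union]
  by_cases h1 : s i ∈ A <;> by_cases h2 : t i ∈ A <;> by_cases h3 : s i ∈ B <;>
    by_cases h4 : t i ∈ B <;> simp [h1, h2, h3, h4]

lemma dl_posimod (s t : ι → V) (E : Finset ι) (A B : Finset V) :
    (dl s t E (A \ B)).card + (dl s t E (B \ A)).card ≤
      (dl s t E A).card + (dl s t E B).card := by
  simp only [dl, Finset.card_filter]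
  rw [← Finset.sum_add_distrib, ← Finset.sum_add_distrib]
  apply Finset.sum_le_sum
  intro i _
  simp only [Finset.mem_sdiff]
  by_cases h1 : s i ∈ A <;> by_cases h2 : t i ∈ A <;> by_cases h3 : s i ∈ B <;>
    by_cases h4 : t i ∈ B <;> simp [h1, h2, h3, h4]

lemma dl_diff (s t : ι → V) (E : Finset ι) (A B : Finset V) :
    (dl s t E A).card ≤ (dl s t E (A ∪ B)).card + (dl s t E (B \ A)).card := by
  simp only [dl, Finset.card_filter]
  rw [← Finset.sum_add_distrib]
  apply Finset.sum_le_sum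
  intro i _
  simp only [Finset.mem_sdiff, Finset.mem_union]
  by_cases h1 : s i ∈ A <;> by_cases h2 : t i ∈ A <;> by_cases h3 : s i ∈ B <;>
    by_cases h4 : t i ∈ B <;> simp [h1, h2, h3, h4]

/-- existence of a deletable edge -/
lemma exists_deletable {s t : ι → V} {E : Finset ι} (hBL : BL s t E) (hne : E.Nonempty)
    (hloop : ∀ e ∈ E, s e ≠ t e) (hs : ∀ e ∈ E, Odd (deg s t E (s e)))
    (ht : ∀ e ∈ E, Odd (deg s t E (t e))) : ∃ e ∈ E, BL s t (E.erase e) := by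
  let P : Finset V → Prop := fun A => (dl s t E A).card ≤ 2 ∧ ∃ e ∈ E, s e ∈ A ∨ t e ∈ A
  have hP : ∃ A, P A := by
    obtain ⟨e, he⟩ := hne
    exact ⟨Finset.univ, by simp [dl], e, he, by simp⟩
  obtain ⟨A, ⟨hA2, e₀, he₀, hAe₀⟩, hmin⟩ : ∃ A, P A ∧ ∀ B, B ⊂ A → ¬ P B := by
    obtain ⟨A, hA, hm⟩ := (wellFounded_lt (α := Finset V)).has_min {A | P A} hP
    exact ⟨A, hA, fun B hB hPB => hm B hPB hB⟩
  obtain ⟨x, hxA, hxo⟩ : ∃ x ∈ A, Odd (deg s t E x) := by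
    rcases hAe₀ with h | h
    · exact ⟨_, h, hs _ he₀⟩
    · exact ⟨_, h, ht _ he₀⟩
  -- degree equals the size of the cut of a singleton
  have hdx : deg s t E x = (dl s t E {x}).card := by
    simp only [dl, Finset.card_filter, deg]
    apply Finset.sum_congr rfl
    intro i hi
    have := hloop i hi
    by_cases h1 : s i = x
    · have h2 : t i ≠ x := fun h => this (h1.trans h.symm)
      simp [h1, h2]
    · simp [h1]
  have h3 : 3 ≤ (dl s t E {x}).card := by
    have := hBL {x}
    rw [hdx, Nat.odd_iff] at hxo
    omega
  obtain ⟨e, hex, heA⟩ : ∃ e ∈ dl s t E {x}, e ∉ dl s t E A := by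
    by_contra hcon
    push Not at hcon
    have := Finset.card_le_card (show dl s t E {x} ⊆ dl s t E A from hcon)
    omega
  have heE : e ∈ E := (Finset.mem_filter.1 hex).1
  have heA' : s e ∈ A ↔ t e ∈ A := by
    by_contra h; exact heA (Finset.mem_filter.2 ⟨heE, h⟩)
  have hsA : s e ∈ A ∧ t e ∈ A := by
    have h := (Finset.mem_filter.1 hex).2
    simp only [Finset.mem_singleton] at h
    by_cases h1 : s e = x
    · have : s e ∈ A := h1 ▸ hxA
      exact ⟨this, heA'.1 this⟩
    · have h2 : t e = x := by by_contra h2; exact h (by simp [h1, h2])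
      have : t e ∈ A := h2 ▸ hxA
      exact ⟨heA'.2 this, this⟩
  refine ⟨e, heE, ?_⟩
  intro B hB
  have hdB : (dl s t E B).card ≤ 2 ∧ ¬ (s e ∈ B ↔ t e ∈ B) := by
    have h1 : dl s t (E.erase e) B = (dl s t E B).erase e := by
      ext i; simp only [dl, Finset.mem_filter, Finset.mem_erase]; tauto
    have h2 : e ∈ dl s t E B := by
      by_contra h2
      rw [h1, Finset.erase_eq_of_notMem h2] at hB
      exact hBL B hB
    rw [h1, Finset.card_erase_of_mem h2] at hB
    exact ⟨by omega, (Finset.mem_filter.1 h2).2⟩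
  have hi : 3 ≤ (dl s t E (A ∩ B)).card := by
    have hh : ¬ P (A ∩ B) := by
      apply hmin
      refine ⟨Finset.inter_subset_left, fun hsub => ?_⟩
      have h1 := Finset.mem_inter.1 (hsub hsA.1)
      have h2 := Finset.mem_inter.1 (hsub hsA.2)
      exact hdB.2 ⟨fun _ => h2.2, fun _ => h1.2⟩
    by_contra hlt
    apply hh
    refine ⟨by omega, e, heE, ?_⟩
    simp only [Finset.mem_inter]; tauto
  have hd : 3 ≤ (dl s t E (A \ B)).card := by
    have hh : ¬ P (A \ B) := by
      apply hmin
      refine ⟨Finset.sdiff_subset, fun hsub => ?_⟩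
      have h1 := Finset.mem_sdiff.1 (hsub hsA.1)
      have h2 := Finset.mem_sdiff.1 (hsub hsA.2)
      exact hdB.2 ⟨fun h => absurd h h1.2, fun h => absurd h h2.2⟩
    by_contra hlt
    apply hh
    refine ⟨by omega, e, heE, ?_⟩
    simp only [Finset.mem_sdiff]; tauto
  have q1 := dl_submod s t E A B
  have q2 := dl_posimod s t E A B
  have q3 := dl_diff s t E A B
  have q4 := hBL (A ∪ B)
  have q5 := hBL (B \ A)
  have := hdB.1
  omega

theorem F_bound (y : ℝ) (hy : 0 ≤ y) (k : ℕ) : ∀ (s t : ι → V) (E : Finset ι), E.card = k →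
    BL s t E →
    (2 : ℝ) ^ ((odds s t E).card / 2) ≤ (-1) ^ nul s t E * F s t E (-y) := by
  induction k with
  | zero =>
    intro s t E hE _
    rw [Finset.card_eq_zero] at hE
    subst hE
    simp [F, nul, cc_empty, odds, deg]
  | succ k ih =>
    intro s t E hE hBL
    have herase : ∀ e ∈ E, (E.erase e).card = k := fun e he => by
      rw [Finset.card_erase_of_mem he, hE]; rfl
    have hcontr : ∀ e ∈ E, ∀ u v : V, u ≠ v → ((s e = u ∧ t e = v) ∨ (s e = v ∧ t e = u)) →
        (-1 : ℝ) ^ nul s t E * F s t E (-y) =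
        (-1) ^ nul (mg u v ∘ s) (mg u v ∘ t) (E.erase e)
          * F (mg u v ∘ s) (mg u v ∘ t) (E.erase e) (-y) +
        (-1) ^ nul s t (E.erase e) * F s t (E.erase e) (-y) := by
      intro e he u v huv hh
      have hBL' := hBL
      rw [nul_contract (Finset.notMem_erase e E) huv hh]
      rw [← Finset.insert_erase he] at hBL' 
      have h1 := nul_insert_conn (Finset.notMem_erase e E) (BL_conn (Finset.notMem_erase e E) hBL')
      have h2 := F_contract s t (E.erase e) e (Finset.notMem_erase e E) (-y) huv hh
      rw [Finset.insert_erase he] at h1 h2 ⊢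
      rw [h2, h1]; ring
    have hpos : ∀ e ∈ E, 0 ≤ (-1 : ℝ) ^ nul s t (E.erase e) * F s t (E.erase e) (-y) := by
      intro e he
      by_cases hb : BL s t (E.erase e)
      · exact le_trans (by positivity) (ih s t _ (herase e he) hb)
      · rw [F_not_BL hb]; simp
    by_cases hl : ∃ e ∈ E, s e = t e
    · obtain ⟨e, he, hst⟩ := hl
      have hn := Finset.notMem_erase e E
      rw [← Finset.insert_erase he] at hBL ⊢
      have h1 := ih s t (E.erase e) (herase e he) (BL_loop hst hBL)
      rw [odds_loop hn hst, F_loop _ _ _ _ hn _ hst, nul_insert_conn hn (by rw [hst]; rfl)]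
      have h2 : (0 : ℝ) < 2 ^ ((odds s t (E.erase e)).card / 2) := by positivity
      have h3 : (-1 : ℝ) ^ (nul s t (E.erase e) + 1) * ((-y - 1) * F s t (E.erase e) (-y)) =
        (1 + y) * ((-1) ^ nul s t (E.erase e) * F s t (E.erase e) (-y)) := by ring
      rw [h3]
      nlinarith
    push Not at hl
    have heven : ∀ e ∈ E, ∀ u v : V, u ≠ v → ((s e = u ∧ t e = v) ∨ (s e = v ∧ t e = u)) →
        ¬ Odd (deg s t E v) →
        (2 : ℝ) ^ ((odds s t E).card / 2) ≤ (-1) ^ nul s t E * F s t E (-y) := by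
      intro e he u v huv hh hv
      rw [hcontr e he u v huv hh]
      have hn := Finset.notMem_erase e E
      rw [← Finset.insert_erase he] at hBL hv
      have h1 := ih _ _ (E.erase e) (herase e he) (BL_contract hn hh hBL)
      have h2 := Finset.card_le_card (odds_contract_even hn huv hh hv)
      rw [Finset.insert_erase he] at h2
      have h3 : (2 : ℝ) ^ ((odds s t E).card / 2) ≤
          2 ^ ((odds (mg u v ∘ s) (mg u v ∘ t) (E.erase e)).card / 2) :=
        pow_le_pow_right₀ (by norm_num) (Nat.div_le_div_right h2)
      have h4 := hpos e he
      linarith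
    by_cases hs : ∀ e ∈ E, Odd (deg s t E (s e))
    swap
    · push Not at hs
      obtain ⟨e, he, hs⟩ := hs
      exact heven e he (t e) (s e) (hl e he).symm (Or.inr ⟨rfl, rfl⟩) (by simpa using hs)
    by_cases ht : ∀ e ∈ E, Odd (deg s t E (t e))
    swap
    · push Not at ht
      obtain ⟨e, he, ht⟩ := ht
      exact heven e he (s e) (t e) (hl e he) (Or.inl ⟨rfl, rfl⟩) (by simpa using ht)
    obtain ⟨e, he, hb⟩ := exists_deletable hBL (Finset.card_pos.1 (by omega)) hl hs ht
    have hn := Finset.notMem_erase e E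
    have hh : (s e = s e ∧ t e = t e) ∨ (s e = t e ∧ t e = s e) := Or.inl ⟨rfl, rfl⟩
    rw [hcontr e he (s e) (t e) (hl e he) hh]
    have g1 := ih s t (E.erase e) (herase e he) hb
    have hBL' := hBL
    rw [← Finset.insert_erase he] at hBL'
    have g2 := ih _ _ (E.erase e) (herase e he) (BL_contract hn hh hBL')
    have c1 := odds_contract (s := s) (t := t) hn hh
    have c2 := odds_delete (s := s) (t := t) hn
    rw [Finset.insert_erase he] at c1 c2
    have c3 : 2 ≤ (odds s t E).card := by
      rw [← Finset.card_pair (hl e he)]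
      apply Finset.card_le_card
      intro x hx
      simp only [Finset.mem_insert, Finset.mem_singleton] at hx
      simp only [odds, Finset.mem_filter, Finset.mem_univ, true_and]
      rcases hx with rfl | rfl
      · exact hs e he
      · exact ht e he
    obtain ⟨j, hj⟩ : ∃ j, (odds s t E).card / 2 = j + 1 := ⟨(odds s t E).card / 2 - 1, by omega⟩
    have d1 : (2 : ℝ) ^ j ≤ 2 ^ ((odds s t (E.erase e)).card / 2) :=
      pow_le_pow_right₀ (by norm_num) (by omega)
    have d2 : (2 : ℝ) ^ j ≤
        2 ^ ((odds (mg (s e) (t e) ∘ s) (mg (s e) (t e) ∘ t) (E.erase e)).card / 2) :=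
      pow_le_pow_right₀ (by norm_num) (by omega)
    rw [hj, pow_succ]
    linarith

end FlowAux

namespace FlowAux

lemma sum_sum_powersetCard (M : Multiset ℝ) : ∀ j : ℕ,
    ((M.powersetCard (j + 1)).map (fun S => S.sum)).sum
      = ((Multiset.card M - 1).choose j : ℝ) * M.sum := by
  induction M using Multiset.induction_on with
  | empty => intro j; rw [Multiset.powersetCard_zero_right]; simp
  | cons a M ih =>
    intro j
    rw [Multiset.powersetCard_cons, Multiset.map_add, Multiset.sum_add, ih j, Multiset.map_map]
    simp only [Function.comp_def, Multiset.sum_cons, Multiset.card_cons, Nat.add_sub_cancel]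
    rw [Multiset.sum_map_add]
    simp only [Multiset.map_const', Multiset.sum_replicate, Multiset.card_powersetCard,
      nsmul_eq_mul]
    rcases j with _ | j
    · simp; ring
    · rw [ih j]
      rcases Nat.eq_zero_or_pos (Multiset.card M) with h | h
      · rw [Multiset.card_eq_zero] at h; subst h; simp
      · obtain ⟨k, hk⟩ : ∃ k, Multiset.card M = k + 1 := ⟨Multiset.card M - 1, by omega⟩
        rw [hk, Nat.choose_succ_succ]; simp only [Nat.add_sub_cancel]; push_cast; ring

lemma prod_ge (S : Multiset ℝ) (hS : ∀ r ∈ S, 0 < r) :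
    1 + (S.map Real.log).sum ≤ S.prod ∧ 0 < S.prod := by
  have h : 0 < S.prod ∧ (S.map Real.log).sum = Real.log S.prod := by
    induction S using Multiset.induction_on with
    | empty => simp
    | cons a S ih =>
      have ha := hS a (by simp)
      obtain ⟨h1, h2⟩ := ih (fun r hr => hS r (by simp [hr]))
      simp only [Multiset.prod_cons, Multiset.map_cons, Multiset.sum_cons]
      exact ⟨by positivity, by rw [h2, Real.log_mul ha.ne' h1.ne']⟩
  refine ⟨?_, h.1⟩
  rw [h.2]
  have := Real.log_le_sub_one_of_pos h.1
  linarith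

lemma esymm_ge_one (M : Multiset ℝ) (hM : ∀ r ∈ M, 0 < r) (hp : 1 ≤ M.prod) (j : ℕ) :
    ((Multiset.card M).choose j : ℝ) ≤ M.esymm j := by
  have hlog : 0 ≤ (M.map Real.log).sum := by
    have : ∀ S : Multiset ℝ, (∀ r ∈ S, 0 < r) → 0 < S.prod ∧ 
        (S.map Real.log).sum = Real.log S.prod := by
      intro S hS
      induction S using Multiset.induction_on with
      | empty => simp
      | cons a S ih =>
        have ha := hS a (by simp)
        obtain ⟨h1, h2⟩ := ih (fun r hr => hS r (by simp [hr]))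
        simp only [Multiset.prod_cons, Multiset.map_cons, Multiset.sum_cons]
        exact ⟨by positivity, by rw [h2, Real.log_mul ha.ne' h1.ne']⟩
    rw [(this M hM).2]; exact Real.log_nonneg hp
  unfold Multiset.esymm
  have h1 : ((M.powersetCard j).map (fun S => 1 + (S.map Real.log).sum)).sum ≤
      ((M.powersetCard j).map Multiset.prod).sum := by
    apply Multiset.sum_map_le_sum_map
    intro S hS
    exact (prod_ge S (fun r hr => hM r
      (Multiset.mem_of_le (Multiset.mem_powersetCard.1 hS).1 hr))).1
  refine le_trans ?_ h1
  rw [Multiset.sum_map_add]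
  simp only [Multiset.map_const', Multiset.sum_replicate, Multiset.card_powersetCard,
      nsmul_eq_mul, mul_one]
  rcases j with _ | j
  · simp
  · have h2 := sum_sum_powersetCard (M.map Real.log) j
    rw [Multiset.powersetCard_map, Multiset.map_map] at h2
    simp only [Function.comp_def] at h2
    rw [h2]
    have : 0 ≤ (((Multiset.card (M.map Real.log) - 1).choose j : ℕ) : ℝ) * (M.map Real.log).sum := by
      positivity
    linarith

lemma esymm_ge (M : Multiset ℝ) (hM : ∀ r ∈ M, 0 < r) (hp : 2 ^ Multiset.card M ≤ M.prod) (j : ℕ) :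
    2 ^ j * ((Multiset.card M).choose j : ℝ) ≤ M.esymm j := by
  have h1 := esymm_ge_one (M.map (fun r => (2:ℝ)⁻¹ • r)) (by
    intro r hr
    obtain ⟨a, ha, rfl⟩ := Multiset.mem_map.1 hr
    have := hM a ha
    simp only [smul_eq_mul]; positivity) (by
    simp only [smul_eq_mul]
    rw [Multiset.prod_map_mul]
    simp only [Multiset.map_const', Multiset.prod_replicate, Multiset.map_id']
    rw [inv_pow, ← div_eq_inv_mul, one_le_div (by positivity)]
    exact hp) j
  rw [← Multiset.pow_smul_esymm, Multiset.card_map, smul_eq_mul, inv_pow, ← div_eq_inv_mul,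
    le_div_iff₀ (by positivity)] at h1
  linarith

/-- analytic part -/
theorem coeff_bound (P : ℤ[X]) (N : ℕ) (hmon : P.Monic) (hdeg : P.natDegree = N + 1)
    (hreal : ∀ z : ℂ, (P.map (Int.castRingHom ℂ)).IsRoot z → z.im = 0)
    (hpos : ∀ y : ℝ, 0 ≤ y → (P.map (Int.castRingHom ℝ)).eval (-y) ≠ 0)
    (h1 : P.eval 1 = 0) (h0 : 2 ^ N ≤ |(P.map (Int.castRingHom ℝ)).eval 0|) (i : ℕ) :
    ((X + 1) * (X + 2) ^ N : ℤ[X]).coeff i ≤ |P.coeff i| := by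
  set Q := P.map (Int.castRingHom ℝ) with hQ
  have hQC : Q.map Complex.ofRealHom = P.map (Int.castRingHom ℂ) := by
    rw [hQ, Polynomial.map_map]; congr 1
  have hQm : Q.Monic := hmon.map _
  have hQd : Q.natDegree = N + 1 := by rw [hQ, hmon.natDegree_map, hdeg]
  -- splitting
  obtain ⟨M, hMQ⟩ : ∃ M : Multiset ℝ, Q = (M.map (fun r => X - C r)).prod := by
    have hs := IsAlgClosed.splits (Q.map Complex.ofRealHom)
    refine ⟨(Q.map Complex.ofRealHom).roots.map Complex.re, ?_⟩
    apply Polynomial.map_injective Complex.ofRealHom Complex.ofRealHom.injective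
    have h2 := hs.eq_prod_roots
    rw [(hQm.map _).leadingCoeff, C_1, one_mul] at h2
    rw [Polynomial.map_multiset_prod, Multiset.map_map, Multiset.map_map]
    conv_lhs => rw [h2]
    congr 1
    apply Multiset.map_congr rfl
    intro z hz
    have him := hreal z (by rw [← hQC]; exact (Polynomial.mem_roots'.1 hz).2)
    have : ((z.re : ℝ) : ℂ) = z := Complex.ext (by simp) (by simp [him])
    simp [this]
  have hcard : Multiset.card M = N + 1 := by
    rw [← hQd, hMQ, natDegree_multiset_prod_X_sub_C_eq_card]
  have hroot : ∀ r, Q.eval r = 0 ↔ r ∈ M := by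
    intro r
    rw [← Polynomial.IsRoot.def, ← Polynomial.mem_roots hQm.ne_zero]
    rw [hMQ, roots_multiset_prod_X_sub_C]
  have hMpos : ∀ r ∈ M, 0 < r := by
    intro r hr
    by_contra hn
    apply hpos (-r) (by linarith)
    rw [neg_neg]; exact (hroot r).2 hr
  have h1M : (1 : ℝ) ∈ M := by
    rw [← hroot, hQ, eval_map, eval₂_at_one, h1]; simp
  obtain ⟨M', rfl⟩ := Multiset.exists_cons_of_mem h1M
  have hcard' : Multiset.card M' = N := by simpa using hcard
  have hM'pos : ∀ r ∈ M', 0 < r := fun r hr => hMpos r (by simp [hr])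
  have hprod : 2 ^ N ≤ M'.prod := by
    have h3 : |Q.eval 0| = M'.prod := by
      rw [hMQ, eval_multiset_prod, Multiset.map_map]
      simp only [Function.comp_def, eval_sub, eval_X, eval_C, zero_sub, Multiset.map_cons,
        Multiset.prod_cons]
      rw [Multiset.prod_map_neg, abs_mul, abs_mul, abs_pow]
      simp [abs_of_pos (prod_ge M' hM'pos).2]
    rwa [h3] at h0
  -- compare
  have hR : ∀ k, ((X + C 2 : ℝ[X]) ^ N).coeff k ≤ ((M'.map (fun r => X + C r)).prod).coeff k := by
    intro k
    rw [coeff_X_add_C_pow]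
    by_cases hk : k ≤ N
    · rw [Multiset.prod_X_add_C_coeff _ (by rw [hcard']; exact hk), hcard']
      have := esymm_ge M' hM'pos (by rw [hcard']; exact hprod) (N - k)
      rwa [hcard', Nat.choose_symm hk] at this
    · rw [Nat.choose_eq_zero_of_lt (by omega), Nat.cast_zero, mul_zero,
        coeff_eq_zero_of_natDegree_lt]
      rw [natDegree_multiset_prod_of_monic, Multiset.map_map]
      · simp [Function.comp_def, hcard']; omega
      · intro f hf
        obtain ⟨r, -, rfl⟩ := Multiset.mem_map.1 hf
        exact monic_X_add_C r
  have hS : ∀ k, ((X + 1) * (X + C 2 : ℝ[X]) ^ N).coeff k ≤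
      (((1 ::ₘ M').map (fun r => X + C r)).prod).coeff k := by
    intro k
    rw [Multiset.map_cons, Multiset.prod_cons, C_1, add_mul, add_mul, one_mul, one_mul,
      coeff_add, coeff_add]
    rcases k with _ | k
    · rw [coeff_X_mul_zero, coeff_X_mul_zero]; linarith [hR 0]
    · rw [coeff_X_mul, coeff_X_mul]; linarith [hR k, hR (k+1)]
  have hT : (((1 ::ₘ M').map (fun r => X + C r)).prod).coeff i ≤ |Q.coeff i| := by
    by_cases hi : i ≤ Multiset.card (1 ::ₘ M')
    · rw [hMQ, Multiset.prod_X_add_C_coeff _ hi, Multiset.prod_X_sub_C_coeff _ hi, abs_mul,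
        abs_pow, abs_neg, abs_one, one_pow, one_mul]
      exact le_abs_self _
    · rw [coeff_eq_zero_of_natDegree_lt]
      · positivity
      rw [natDegree_multiset_prod_of_monic, Multiset.map_map]
      · simp [Function.comp_def] at hi ⊢; omega
      · intro f hf
        obtain ⟨r, -, rfl⟩ := Multiset.mem_map.1 hf
        exact monic_X_add_C r
  have hfin := (hS i).trans hT
  have e1 : ((X + 1) * (X + C 2 : ℝ[X]) ^ N) =
      ((X + 1) * (X + 2) ^ N : ℤ[X]).map (Int.castRingHom ℝ) := by
    simp only [Polynomial.map_mul, Polynomial.map_pow, Polynomial.map_add, Polynomial.map_X,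
      Polynomial.map_one, Polynomial.map_ofNat]
    rfl
  rw [e1, hQ, coeff_map, coeff_map] at hfin
  simp only [eq_intCast] at hfin
  exact_mod_cast hfin

end FlowAux

namespace FlowAux

section graph
open Classical

variable {V : Type} [Fintype V] (G : SimpleGraph V)

noncomputable def sv (e : Sym2 V) : V := (Quot.out e).1
noncomputable def tv (e : Sym2 V) : V := (Quot.out e).2

lemma sv_tv (e : Sym2 V) : s(sv e, tv e) = e := Quot.out_eq e

lemma cc_eq (Z : Finset (Sym2 V)) :
    Nat.card (SimpleGraph.fromEdgeSet (↑Z : Set (Sym2 V))).ConnectedComponent = cc sv tv Z := by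
  symm
  apply Nat.card_congr
  refine ⟨Quot.lift (fun x => SimpleGraph.connectedComponentMk _ x) ?_,
    Quot.lift (fun x => Quot.mk _ x) ?_, ?_, ?_⟩
  · rintro a b ⟨i, hi, rfl, rfl⟩
    apply SimpleGraph.ConnectedComponent.sound
    by_cases h : sv i = tv i
    · rw [h]
    · apply SimpleGraph.Adj.reachable
      rw [SimpleGraph.fromEdgeSet_adj, sv_tv]
      exact ⟨hi, h⟩
  · rintro a b ⟨p⟩
    induction p with
    | nil => rfl
    | @cons a c d h p ih =>
      refine Eq.trans ?_ ih
      rw [SimpleGraph.fromEdgeSet_adj] at h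
      have h2 := conn_of_mem (s := sv) (t := tv) (Finset.mem_coe.1 h.1)
      have h3 := sv_tv s(a, c)
      rw [Sym2.eq_iff] at h3
      rcases h3 with ⟨h4, h5⟩ | ⟨h4, h5⟩
      · rw [h4, h5] at h2; exact h2
      · rw [h4, h5] at h2; exact h2.symm
  · rintro ⟨x⟩; rfl
  · rintro ⟨x⟩; rfl

noncomputable def EE : Finset (Sym2 V) := G.edgeSet.toFinite.toFinset

lemma mem_EE (e : Sym2 V) : e ∈ EE G ↔ e ∈ G.edgeSet := by simp [EE]

lemma EE_eq : EE G = G.edgeFinset := by ext; simp [EE]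

lemma flowPoly_eq : flowPoly G = ∑ Z ∈ (EE G).powerset,
    C ((-1 : ℤ) ^ ((EE G).card + Z.card)) * X ^ nul sv tv Z := by
  unfold flowPoly
  apply Finset.sum_congr rfl
  intro Z hZ
  have hle := Finset.card_le_card (Finset.mem_powerset.1 hZ)
  rw [cc_eq, smul_eq_C_mul]
  congr 2
  change (-1 : ℤ) ^ ((EE G).card - Z.card) = _
  have : (EE G).card + Z.card = ((EE G).card - Z.card) + 2 * Z.card := by
    have : Z.card ≤ (EE G).card := hle
    omega
  rw [this, pow_add, pow_mul]; simp

lemma eval_eq (x : ℝ) :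
    ((flowPoly G).map (Int.castRingHom ℝ)).eval x = F sv tv (EE G) x := by
  rw [flowPoly_eq, Polynomial.map_sum, eval_finsetSum]
  unfold F
  apply Finset.sum_congr rfl
  intro Z _
  simp

lemma BL_graph (hconn : G.Connected) (hb : ∀ e : Sym2 V, ¬ G.IsBridge e) :
    BL sv tv (EE G) := by
  intro A hA
  obtain ⟨e, he⟩ := Finset.card_eq_one.1 hA
  have h1 : e ∈ dl sv tv (EE G) A := by rw [he]; simp
  have h2 := Finset.mem_filter.1 h1
  apply hb e
  rw [← sv_tv e, SimpleGraph.isBridge_iff]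
  rintro ⟨p⟩
  apply h2.2
  have key : ∀ {a b : V} (p : (G.deleteEdges {s(sv e, tv e)}).Walk a b), a ∈ A ↔ b ∈ A := by
    intro a b p
    induction p with
    | nil => rfl
    | @cons a c d h p ih =>
      refine Iff.trans ?_ ih
      rw [SimpleGraph.deleteEdges_adj, sv_tv] at h
      by_contra hcon
      have h4 : s(a, c) ∈ dl sv tv (EE G) A := by
        refine Finset.mem_filter.2 ⟨(mem_EE G _).2 h.1, ?_⟩
        have h3 := sv_tv s(a, c)
        rw [Sym2.eq_iff] at h3
        rcases h3 with ⟨h4, h5⟩ | ⟨h4, h5⟩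
        · rw [h4, h5]; exact hcon
        · rw [h4, h5]; tauto
      rw [he, Finset.mem_singleton] at h4
      exact h.2 h4
  exact key p

lemma deg_graph (x : V) : deg sv tv (EE G) x = Nat.card (G.neighborSet x) := by
  have h1 : deg sv tv (EE G) x = (G.incidenceFinset x).card := by
    rw [SimpleGraph.incidenceFinset_eq_filter, Finset.card_filter, ← EE_eq]
    unfold deg
    apply Finset.sum_congr rfl
    intro i hi
    have hne : sv i ≠ tv i := by
      rw [mem_EE, ← sv_tv i, SimpleGraph.mem_edgeSet] at hi
      exact hi.ne
    have : x ∈ i ↔ (sv i = x ∨ tv i = x) := by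
      conv_lhs => rw [← sv_tv i]
      rw [Sym2.mem_iff]
      exact ⟨fun h => h.imp Eq.symm Eq.symm, fun h => h.imp Eq.symm Eq.symm⟩
    simp only [this]
    by_cases h1 : sv i = x
    · have h2 : tv i ≠ x := fun h => hne (h1.trans h.symm)
      simp [h1, h2]
    · simp [h1]
  rw [h1, SimpleGraph.card_incidenceFinset_eq_degree, ← SimpleGraph.card_neighborSet_eq_degree,
    Nat.card_eq_fintype_card]

lemma cc_graph (hconn : G.Connected) : cc sv tv (EE G) = 1 := by
  rw [← cc_eq]
  have : SimpleGraph.fromEdgeSet (↑(EE G) : Set (Sym2 V)) = G := by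
    have : (↑(EE G) : Set (Sym2 V)) = G.edgeSet := by ext; simp [mem_EE]
    rw [this, SimpleGraph.fromEdgeSet_edgeSet]
  rw [this, Nat.card_eq_one_iff_unique]
  have hne := hconn.nonempty
  refine ⟨hconn.preconnected.subsingleton_connectedComponent, ⟨G.connectedComponentMk hne.some⟩⟩

lemma flow_deg (h : BL sv tv (EE G)) :
    (flowPoly G).Monic ∧ (flowPoly G).natDegree = nul sv tv (EE G) := by
  have h1 : flowPoly G = X ^ nul sv tv (EE G) + ∑ Z ∈ (EE G).powerset.erase (EE G),
      C ((-1 : ℤ) ^ ((EE G).card + Z.card)) * X ^ nul sv tv Z := by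
    rw [flowPoly_eq, ← Finset.add_sum_erase _ _ (Finset.mem_powerset_self (EE G))]
    congr 1
    rw [← two_mul, pow_mul]; simp
  have h2 : (∑ Z ∈ (EE G).powerset.erase (EE G),
      C ((-1 : ℤ) ^ ((EE G).card + Z.card)) * X ^ nul sv tv Z : ℤ[X]).degree <
        (nul sv tv (EE G) : WithBot ℕ) := by
    refine lt_of_le_of_lt (Polynomial.degree_sum_le _ _) ?_
    rw [Finset.sup_lt_iff (WithBot.bot_lt_coe _)]
    intro Z hZ
    rw [Finset.mem_erase, Finset.mem_powerset] at hZ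
    refine lt_of_le_of_lt (degree_C_mul_X_pow_le _ _) ?_
    exact_mod_cast nul_lt h (Finset.ssubset_iff_subset_ne.2 ⟨hZ.2, hZ.1⟩)
  rw [h1]
  refine ⟨monic_X_pow_add h2, ?_⟩
  apply natDegree_eq_of_degree_eq_some
  rw [degree_add_eq_left_of_degree_lt] <;> rw [degree_X_pow]
  exact h2

lemma eval_one (hne : (EE G).Nonempty) : (flowPoly G).eval 1 = 0 := by
  rw [flowPoly_eq, eval_finsetSum]
  have := Finset.sum_powerset_neg_one_pow_card_of_nonempty hne
  simp only [eval_mul, eval_C, eval_pow, eval_X, one_pow, mul_one, pow_add]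
  rw [← Finset.mul_sum, this, mul_zero]

end graph

end FlowAux

/-- Lower bound on the absolute values of the coefficients of the flow polynomial of a
connected bridgeless simple cubic graph with only real flow roots. -/
theorem stmt_3 {V : Type} [Fintype V] (G : SimpleGraph V)
    (hconn : G.Connected) (hbridgeless : ∀ e : Sym2 V, ¬ G.IsBridge e)
    (hcubic : ∀ v : V, Nat.card (G.neighborSet v) = 3)
    (hreal : ∀ z : ℂ, ((flowPoly G).map (Int.castRingHom ℂ)).IsRoot z → z.im = 0)
    (n m : ℕ) (hn : n = Fintype.card V) (hm : m = edgeCount G) :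
    ∀ i ≤ m - n + 1,
      ((X + 1) * (X + 2) ^ (n / 2) : Polynomial ℤ).coeff i ≤ |(flowPoly G).coeff i| := by
  classical
  intro i _
  have hBL := FlowAux.BL_graph G hconn hbridgeless
  have hdeg3 : ∀ v, FlowAux.deg FlowAux.sv FlowAux.tv (FlowAux.EE G) v = 3 := fun v => by
    rw [FlowAux.deg_graph, hcubic v]
  have hodds : FlowAux.odds FlowAux.sv FlowAux.tv (FlowAux.EE G) = Finset.univ := by
    ext v
    simp only [FlowAux.odds, Finset.mem_filter, Finset.mem_univ, true_and, hdeg3, iff_true]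
    decide
  have hhand : 3 * n = 2 * m := by
    have h := G.sum_degrees_eq_twice_card_edges
    have h3 : ∀ v, G.degree v = 3 := fun v => by
      rw [← hcubic v, ← SimpleGraph.card_neighborSet_eq_degree, Nat.card_eq_fintype_card]
    simp only [h3, Finset.sum_const, Finset.card_univ, smul_eq_mul] at h
    have h4 : m = G.edgeFinset.card := by rw [hm, ← FlowAux.EE_eq]; rfl
    rw [hn, h4]; omega
  have hn0 : 0 < n := by
    rw [hn]; have := hconn.nonempty; exact Fintype.card_pos
  have hEm : (FlowAux.EE G).card = m := by rw [hm]; rfl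
  have hnul : FlowAux.nul FlowAux.sv FlowAux.tv (FlowAux.EE G) = n / 2 + 1 := by
    unfold FlowAux.nul
    rw [FlowAux.cc_graph G hconn, hEm, ← hn]; omega
  have hbound : ∀ y : ℝ, 0 ≤ y → (2 : ℝ) ^ (n / 2) ≤
      |((flowPoly G).map (Int.castRingHom ℝ)).eval (-y)| := by
    intro y hy
    have h := FlowAux.F_bound y hy _ _ _ _ rfl hBL
    rw [hodds, Finset.card_univ, ← hn, ← FlowAux.eval_eq] at h
    refine h.trans ((le_abs_self _).trans ?_)
    rw [abs_mul, abs_pow, abs_neg, abs_one, one_pow, one_mul]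
  obtain ⟨hmon, hd⟩ := FlowAux.flow_deg G hBL
  refine FlowAux.coeff_bound (flowPoly G) (n / 2) hmon (hd.trans hnul) hreal ?_ ?_ ?_ i
  · intro y hy h0
    have := hbound y hy
    rw [h0, abs_zero] at this
    exact absurd this (not_le.2 (by positivity))
  · exact FlowAux.eval_one G (Finset.card_pos.1 (by omega))
  · have := hbound 0 le_rfl
    rwa [neg_zero] at this
end
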